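/- Minimax lower bound (dense case): There exist constants c₁, c₂ > 0 (depending only on the constant c) such that for every n ≥ 1, every r ∈ {1,…,m}, every ρ > 0, every a > 0 and every p ∈ [2,∞), setting δₙ⁽¹⁾(r,ρ,a) := max_{l₀ ≤ l ≤ m} [ (a²·(min(r,l))·l/n) ∧ (ρ²/λ_l) ∧ ( (1/(p−1))·(1/Q_p²)·(a²·min(r,l)/l)·m^{−4/p} ) ], the following holds: for every estimator Ŝₙ (a measurable map from (V×V×ℝ)ⁿ to 𝒮_V), sup_{P ∈ 𝒫_{r,ρ,a}} P^{⊗n}{ ‖Ŝₙ((X₁,X₁',Y₁),…,(Xₙ,Xₙ',Yₙ)) − S_P‖²_{L₂(Π²)} ≥ c₁·δₙ⁽¹⁾(r,ρ,a) } ≥ c₂. -/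

import Mathlib

open MeasureTheory Finset
open scoped ENNReal NNReal

noncomputable section

/-- Sample space for one observation: a pair of vertices `(X, X')` and a response `Y`. -/
abbrev Obs (m : ℕ) := Fin m × Fin m × ℝ

/-- Squared Hilbert–Schmidt (Frobenius) norm of a kernel. -/
def hsNormSq {m : ℕ} (S : Matrix (Fin m) (Fin m) ℝ) : ℝ := ∑ u, ∑ v, (S u v) ^ 2

/-- Squared `L₂(Π²)` norm: `‖S‖²_{L₂(Π²)} = m⁻² ‖S‖₂²`. -/
def l2PiSq {m : ℕ} (S : Matrix (Fin m) (Fin m) ℝ) : ℝ := hsNormSq S / (m : ℝ) ^ 2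

/-- Squared Sobolev (Hilbert–Schmidt) norm `‖W^{1/2}S‖₂² = ∑ₖ λₖ ‖S φₖ‖²`,
expressed through the eigendata `(lam, φ)` of `W` (indexed by `1,…,m`). -/
def sobolevHSSq {m : ℕ} (lam : ℕ → ℝ) (φ : ℕ → Fin m → ℝ)
    (S : Matrix (Fin m) (Fin m) ℝ) : ℝ :=
  ∑ k ∈ Finset.Icc 1 m, lam k * ∑ u, (S.mulVec (φ k) u) ^ 2

/-- `φ₁,…,φ_m` are orthonormal in `ℝ^V` (Euclidean inner product). -/
def OrthonormalFamily (m : ℕ) (φ : ℕ → Fin m → ℝ) : Prop :=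
  ∀ j ∈ Finset.Icc 1 m, ∀ k ∈ Finset.Icc 1 m,
    (∑ v, φ j v * φ k v) = if j = k then (1 : ℝ) else 0

/-- Eigendata of the positive semidefinite kernel `W`: orthonormal eigenfunctions `φ`,
nonnegative nondecreasing eigenvalues `lam` (indexed by `1,…,m`), `k0` the smallest index
of a positive eigenvalue, and `λ_{k+1} ≤ c·λ_k` for `k ≥ k0`. -/
structure IsEigenData (m : ℕ) (c : ℝ) (lam : ℕ → ℝ) (φ : ℕ → Fin m → ℝ) (k0 : ℕ) : Prop where
  orth : OrthonormalFamily m φ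
  nonneg : ∀ k ∈ Finset.Icc 1 m, 0 ≤ lam k
  mono : ∀ k l : ℕ, 1 ≤ k → k ≤ l → l ≤ m → lam k ≤ lam l
  k0_mem : 1 ≤ k0 ∧ k0 ≤ m ∧ 0 < lam k0
  k0_min : ∀ k ∈ Finset.Icc 1 m, 0 < lam k → k0 ≤ k
  ratio : ∀ k : ℕ, k0 ≤ k → k + 1 ≤ m → lam (k + 1) ≤ c * lam k

/-- The design `(X, X')` is uniformly distributed on `V × V`. -/
def UniformDesign (m : ℕ) (P : Measure (Obs m)) : Prop :=
  ∀ u v : Fin m, P {z : Obs m | z.1 = u ∧ z.2.1 = v} = ((m : ℝ≥0∞) ^ 2)⁻¹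

/-- The regression kernel `S_P(u,v) = m²·E_P[Y·1{X=u, X'=v}] = E_P(Y | X=u, X'=v)`. -/
def regKernel (m : ℕ) (P : Measure (Obs m)) : Matrix (Fin m) (Fin m) ℝ :=
  Matrix.of fun u v =>
    (m : ℝ) ^ 2 * ∫ z : Obs m, (if z.1 = u ∧ z.2.1 = v then z.2.2 else 0) ∂P

/-- Membership in the class `𝒫_{r,ρ,a}` of sampling distributions. -/
def MemP (m : ℕ) (r : ℕ) (ρ a : ℝ) (lam : ℕ → ℝ) (φ : ℕ → Fin m → ℝ)
    (P : Measure (Obs m)) : Prop :=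
  IsProbabilityMeasure P ∧ UniformDesign m P ∧ (∀ᵐ z ∂P, |z.2.2| ≤ a) ∧
    (regKernel m P).IsSymm ∧ (regKernel m P).rank ≤ r ∧
    sobolevHSSq lam φ (regKernel m P) ≤ ρ ^ 2 * (m : ℝ) ^ 2

/-- `Q_p := max_{1≤j≤m} ‖√m·φ_j‖²_{L_p(Π)}`. -/
def Qp (m : ℕ) (p : ℝ) (φ : ℕ → Fin m → ℝ) : ℝ :=
  ⨆ j ∈ Finset.Icc 1 m, ((∑ v, |Real.sqrt m * φ j v| ^ p) / m) ^ (2 / p)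

/-- The quantity `δₙ⁽¹⁾(r,ρ,a)` (with value in `ℝ≥0∞`, so that `ρ²/λ_l = ∞` when `λ_l = 0`). -/
def delta1 (m n r l0 : ℕ) (ρ a p Q : ℝ) (lam : ℕ → ℝ) : ℝ≥0∞ :=
  ⨆ l ∈ Finset.Icc l0 m,
    min (ENNReal.ofReal (a ^ 2 * (min r l : ℝ) * (l : ℝ) / n))
      (min (ENNReal.ofReal (ρ ^ 2) / ENNReal.ofReal (lam l))
        (ENNReal.ofReal
          ((1 / (p - 1)) * (1 / Q ^ 2) * (a ^ 2 * (min r l : ℝ) / l) *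
            ((m : ℝ) ^ ((4 : ℝ) / p))⁻¹)))

/-!
Assouad's method over a hypercube of regression kernels built from the first `l` eigenfunctions.
Each kernel `S` is realised by a distribution with responses `±a` and conditional mean `S`, which
needs `|S u v| ≤ a`. Two constructions cover all ranks. For `min r l = 1` the kernel is
`κ x ⊗ x`, where `x = ∑ i, (σ i + 2 √l 1{i = 1}) φ i`: the spike makes the map `σ ↦ x ⊗ x`
expand Hamming distances, which it would not do for plain signs because of the symmetry `σ ↦ -σ`.
For `min r l ≥ 2` the kernel is the symmetrisation of a matrix of signs between the first
`min r l / 2` eigenfunctions and the remaining ones.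

The entries are linear or quadratic in the signs, so the moment bound `Q_p` on the eigenfunctions
and a Rademacher tail bound show that they exceed `a / 2` only for a small fraction of the cube.
Truncating the entries to `[-a/2, a/2]` makes every vertex of the cube a legitimate distribution;
truncation is a contraction, so neighbours stay close in Hellinger distance, and the few vertices it
alters are discarded at the end.
-/

section Signs

variable {ι : Type*}

/-- The sign `±1` encoded by a bit; a point of the cube `ι → Bool` is a Rademacher sign vector. -/
def boolSign (b : Bool) : ℝ := if b then 1 else -1

lemma boolSign_sq (b : Bool) : boolSign b ^ 2 = 1 := by cases b <;> simp [boolSign]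

lemma abs_boolSign (b : Bool) : |boolSign b| = 1 := by cases b <;> simp [boolSign]

lemma sum_sq_boolSign_sub [Fintype ι] (σ σ' : ι → Bool) :
    ∑ e, (boolSign (σ e) - boolSign (σ' e)) ^ 2 = 4 * hammingDist σ σ' := by
  have sq_sub (b b' : Bool) : (boolSign b - boolSign b') ^ 2 = if b ≠ b' then 4 else 0 := by
    cases b <;> cases b' <;> norm_num [boolSign]
  simp only [sq_sub, ← Finset.sum_filter, Finset.sum_const, nsmul_eq_mul, hammingDist]
  ring

variable [DecidableEq ι]

/-- The neighbour of `σ` in the cube across the edge in direction `e`. -/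
def flipAt (e : ι) (σ : ι → Bool) : ι → Bool := Function.update σ e (!σ e)

lemma flipAt_apply_self (e : ι) (σ : ι → Bool) : flipAt e σ e = !σ e := by simp [flipAt]

lemma flipAt_involutive (e : ι) : Function.Involutive (flipAt e) := fun σ ↦ by simp [flipAt]

lemma hammingDist_flipAt [Fintype ι] (e : ι) (σ : ι → Bool) :
    hammingDist σ (flipAt e σ) = 1 := by
  rw [hammingDist, Finset.card_eq_one]
  refine ⟨e, Finset.ext fun i ↦ ?_⟩
  rw [Finset.mem_filter_univ, Finset.mem_singleton]
  by_cases hi : i = e <;> simp [flipAt, hi]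

end Signs

section RademacherTail

variable {ι : Type*} [Fintype ι] [DecidableEq ι]

lemma sum_exp_mul_sum_boolSign_le (x : ι → ℝ) (s : ℝ) :
    ∑ σ : ι → Bool, Real.exp (s * ∑ e, boolSign (σ e) * x e) ≤
      2 ^ Fintype.card ι * Real.exp (s ^ 2 * (∑ e, x e ^ 2) / 2) := by
  have sum_bool_le (y : ℝ) : ∑ b, Real.exp (s * (boolSign b * y)) ≤
      2 * Real.exp ((s * y) ^ 2 / 2) := by
    have hcosh := Real.cosh_le_exp_half_sq (s * y)
    rw [Real.cosh_eq] at hcosh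
    simp only [Fintype.sum_bool, boolSign, if_true, Bool.false_eq_true, if_false, one_mul,
      neg_mul, mul_neg]
    linarith
  calc ∑ σ : ι → Bool, Real.exp (s * ∑ e, boolSign (σ e) * x e)
      = ∏ e, ∑ b, Real.exp (s * (boolSign b * x e)) := by
        simp only [Finset.mul_sum, Real.exp_sum, Finset.prod_univ_sum, Fintype.piFinset_univ]
    _ ≤ ∏ e, 2 * Real.exp ((s * x e) ^ 2 / 2) :=
        Finset.prod_le_prod (fun _ _ ↦ by positivity) fun e _ ↦ sum_bool_le (x e)
    _ = 2 ^ Fintype.card ι * Real.exp (s ^ 2 * (∑ e, x e ^ 2) / 2) := by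
        rw [Finset.prod_mul_distrib, ← Real.exp_sum, Finset.prod_const, Finset.card_univ,
          Finset.mul_sum, Finset.sum_div]
        simp only [mul_pow]

lemma card_lt_sum_boolSign_le_exp (x : ι → ℝ) {s : ℝ} (hs : 0 ≤ s) :
    (#{σ : ι → Bool | s < ∑ e, boolSign (σ e) * x e} : ℝ) ≤
      2 ^ Fintype.card ι * Real.exp (-(s ^ 2 / (2 * ∑ e, x e ^ 2))) := by
  set v := ∑ e, x e ^ 2
  have hv : 0 ≤ v := Finset.sum_nonneg fun e _ ↦ sq_nonneg (x e)
  have markov : #{σ : ι → Bool | s < ∑ e, boolSign (σ e) * x e} * Real.exp (s / v * s) ≤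
      ∑ σ : ι → Bool, Real.exp (s / v * ∑ e, boolSign (σ e) * x e) := by
    rw [← nsmul_eq_mul]
    refine (Finset.card_nsmul_le_sum _ _ _ fun σ hσ ↦ ?_).trans
      (Finset.sum_le_sum_of_subset_of_nonneg (Finset.filter_subset _ _)
        fun _ _ _ ↦ (Real.exp_pos _).le)
    have hlt : s < ∑ e, boolSign (σ e) * x e := by simpa using hσ
    gcongr
  have hexponent : (s / v) ^ 2 * v / 2 = -(s ^ 2 / (2 * v)) + s / v * s := by
    rcases hv.eq_or_lt with hv | hv
    · simp [← hv]
    · field_simp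
      ring
  have hmgf := markov.trans (sum_exp_mul_sum_boolSign_le x (s / v))
  rwa [hexponent, Real.exp_add, ← mul_assoc, mul_le_mul_iff_left₀ (Real.exp_pos _)] at hmgf

lemma exp_neg_div_le_rpow {q t v : ℝ} (hq : 0 < q) (ht : 0 < t) (hv : 0 < v) :
    Real.exp (-(t / (2 * v))) ≤ (2 * q / t * v) ^ q := by
  set y := t / (2 * q * v) with hy
  have : 0 < y := by positivity
  calc Real.exp (-(t / (2 * v))) = (Real.exp y)⁻¹ ^ q := by
        rw [← Real.exp_neg, ← Real.exp_mul, hy]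
        congr 1
        field_simp
    _ ≤ y⁻¹ ^ q := by
        gcongr
        linarith [Real.add_one_le_exp y]
    _ = (2 * q / t * v) ^ q := by
        rw [hy, inv_div]
        congr 1
        field_simp

lemma card_lt_sum_boolSign_le_rpow (x : ι → ℝ) {q t : ℝ} (hq : 0 < q) (ht : 0 < t) :
    (#{σ : ι → Bool | √t < ∑ e, boolSign (σ e) * x e} : ℝ) ≤
      2 ^ Fintype.card ι * (2 * q / t * ∑ e, x e ^ 2) ^ q := by
  have hv : 0 ≤ ∑ e, x e ^ 2 := Finset.sum_nonneg fun e _ ↦ sq_nonneg (x e)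
  rcases hv.eq_or_lt with hv | hv
  · have hx (e : ι) : x e = 0 := by
      simpa using (Finset.sum_eq_zero_iff_of_nonneg fun i _ ↦ sq_nonneg (x i)).1 hv.symm e
    rw [Finset.filter_false_of_mem fun σ _ ↦ by simp [hx]]
    simp only [Finset.card_empty, Nat.cast_zero]
    positivity
  · refine (card_lt_sum_boolSign_le_exp x (Real.sqrt_nonneg t)).trans ?_
    rw [Real.sq_sqrt ht.le]
    gcongr
    exact exp_neg_div_le_rpow hq ht hv

lemma card_exists_lt_sq_sum_boolSign_le {κ : Type*} [Fintype κ] (x : κ → ι → ℝ) {q t : ℝ}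
    (hq : 0 < q) (ht : 0 < t) :
    (#{σ : ι → Bool | ∃ k, t < (∑ e, boolSign (σ e) * x k e) ^ 2} : ℝ) ≤
      2 * 2 ^ Fintype.card ι * ((2 * q / t) ^ q * ∑ k, (∑ e, x k e ^ 2) ^ q) := by
  classical
  have subset_union : ({σ : ι → Bool | ∃ k, t < (∑ e, boolSign (σ e) * x k e) ^ 2} : Finset _) ⊆
      Finset.univ.biUnion fun k ↦
        ({σ : ι → Bool | √t < ∑ e, boolSign (σ e) * x k e} : Finset _) ∪
          ({σ : ι → Bool | √t < ∑ e, boolSign (σ e) * -x k e} : Finset _) := fun σ hσ ↦ by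
    obtain ⟨k, hk⟩ : ∃ k, t < (∑ e, boolSign (σ e) * x k e) ^ 2 := by simpa using hσ
    have hlt := lt_abs.1 ((Real.sqrt_lt_sqrt ht.le hk).trans_eq (Real.sqrt_sq_eq_abs _))
    simp only [Finset.mem_biUnion, Finset.mem_union, Finset.mem_filter, Finset.mem_univ, true_and,
      mul_neg, Finset.sum_neg_distrib]
    exact ⟨k, hlt⟩
  have one_le (k : κ) : (#(({σ : ι → Bool | √t < ∑ e, boolSign (σ e) * x k e} : Finset _) ∪
      ({σ : ι → Bool | √t < ∑ e, boolSign (σ e) * -x k e} : Finset _)) : ℝ) ≤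
      2 * 2 ^ Fintype.card ι * ((2 * q / t) ^ q * (∑ e, x k e ^ 2) ^ q) := by
    have hpos := card_lt_sum_boolSign_le_rpow (x k) hq ht
    have hneg := card_lt_sum_boolSign_le_rpow (fun e ↦ -x k e) hq ht
    simp only [neg_sq] at hneg
    rw [← Real.mul_rpow (by positivity) (Finset.sum_nonneg fun e _ ↦ sq_nonneg (x k e))]
    refine (Nat.cast_le.2 (Finset.card_union_le _ _)).trans ?_
    push_cast
    linarith
  calc (#{σ : ι → Bool | ∃ k, t < (∑ e, boolSign (σ e) * x k e) ^ 2} : ℝ)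
      ≤ ∑ k, (#(({σ : ι → Bool | √t < ∑ e, boolSign (σ e) * x k e} : Finset _) ∪
          ({σ : ι → Bool | √t < ∑ e, boolSign (σ e) * -x k e} : Finset _)) : ℝ) := by
        exact_mod_cast (Finset.card_le_card subset_union).trans Finset.card_biUnion_le
    _ ≤ _ := by
        rw [Finset.mul_sum, Finset.mul_sum]
        exact Finset.sum_le_sum fun k _ ↦ one_le k

lemma card_exists_lt_sq_sum_boolSign_le_of_moment {κ : Type*} [Fintype κ] (x : κ → ι → ℝ)
    {q v : ℝ} (hq : 1 ≤ q) (hv : 0 < v) (hmoment : ∑ k, (∑ e, x k e ^ 2) ^ q ≤ v ^ q) :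
    (#{σ : ι → Bool | ∃ k, 80 * q * v < (∑ e, boolSign (σ e) * x k e) ^ 2} : ℝ) ≤
      2 ^ Fintype.card ι / 20 := by
  have hq0 : 0 < q := by linarith
  have pow_le : ((1 : ℝ) / 40) ^ q ≤ 1 / 40 :=
    Real.rpow_le_self_of_le_one (by norm_num) (by norm_num) hq
  calc (#{σ : ι → Bool | ∃ k, 80 * q * v < (∑ e, boolSign (σ e) * x k e) ^ 2} : ℝ)
      ≤ 2 * 2 ^ Fintype.card ι *
          ((2 * q / (80 * q * v)) ^ q * ∑ k, (∑ e, x k e ^ 2) ^ q) :=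
        card_exists_lt_sq_sum_boolSign_le x hq0 (by positivity)
    _ ≤ 2 * 2 ^ Fintype.card ι * ((2 * q / (80 * q * v)) ^ q * v ^ q) := by gcongr
    _ = 2 * 2 ^ Fintype.card ι * (1 / 40) ^ q := by
        rw [← Real.mul_rpow (by positivity) hv.le]
        congr 2
        field_simp
        norm_num
    _ ≤ 2 * 2 ^ Fintype.card ι * (1 / 40) := by gcongr
    _ = 2 ^ Fintype.card ι / 20 := by ring

end RademacherTail

section Hellinger

variable {Z : Type*} [Fintype Z]

/-- The Bhattacharyya coefficient of two weight functions on a finite set. -/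
def bhattacharyya (w w' : Z → ℝ) : ℝ := ∑ z, √(w z * w' z)

/-- The squared Hellinger distance `∑ (√w - √w')²`, without the factor `1/2` used by some
authors. -/
def hellingerSq (w w' : Z → ℝ) : ℝ := ∑ z, (√(w z) - √(w' z)) ^ 2

/-- The testing affinity: the least sum of the two error probabilities of a test between two
weight functions. -/
def affinity (w w' : Z → ℝ) : ℝ := ∑ z, min (w z) (w' z)

/-- The law of `n` independent observations with law `w`. -/
def prodWeight (n : ℕ) (w : Z → ℝ) (z : Fin n → Z) : ℝ := ∏ i, w (z i)

lemma prodWeight_mem_stdSimplex (n : ℕ) {w : Z → ℝ} (hw : w ∈ stdSimplex ℝ Z) :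
    prodWeight n w ∈ stdSimplex ℝ (Fin n → Z) :=
  ⟨fun _ ↦ Finset.prod_nonneg fun _ _ ↦ hw.1 _, by
    simp only [prodWeight, ← Fintype.sum_pow, hw.2, one_pow]⟩

lemma bhattacharyya_prodWeight (n : ℕ) {w w' : Z → ℝ} (hw : 0 ≤ w) (hw' : 0 ≤ w') :
    bhattacharyya (prodWeight n w) (prodWeight n w') = bhattacharyya w w' ^ n := by
  simp only [bhattacharyya, prodWeight, Fintype.sum_pow, ← Finset.prod_mul_distrib]
  exact Finset.sum_congr rfl fun z _ ↦ Real.sqrt_prod _ fun i _ ↦ mul_nonneg (hw _) (hw' _)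

lemma hellingerSq_eq_two_sub {w w' : Z → ℝ} (hw : w ∈ stdSimplex ℝ Z)
    (hw' : w' ∈ stdSimplex ℝ Z) : hellingerSq w w' = 2 - 2 * bhattacharyya w w' := by
  have expand (z : Z) : (√(w z) - √(w' z)) ^ 2 = w z + w' z - 2 * √(w z * w' z) := by
    rw [Real.sqrt_mul (hw.1 z), sub_sq, Real.sq_sqrt (hw.1 z), Real.sq_sqrt (hw'.1 z)]
    ring
  simp only [hellingerSq, expand, Finset.sum_sub_distrib, Finset.sum_add_distrib,
    ← Finset.mul_sum, hw.2, hw'.2, bhattacharyya]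
  ring

lemma sq_bhattacharyya_le {w w' : Z → ℝ} (hw : w ∈ stdSimplex ℝ Z) (hw' : w' ∈ stdSimplex ℝ Z) :
    bhattacharyya w w' ^ 2 ≤ 2 * affinity w w' := by
  have hmin (z : Z) : 0 ≤ min (w z) (w' z) := le_min (hw.1 z) (hw'.1 z)
  have hmax (z : Z) : 0 ≤ max (w z) (w' z) := le_max_of_le_left (hw.1 z)
  have sum_max_le : ∑ z, max (w z) (w' z) ≤ 2 :=
    calc ∑ z, max (w z) (w' z) ≤ ∑ z, (w z + w' z) :=
          Finset.sum_le_sum fun z _ ↦ max_le_add_of_nonneg (hw.1 z) (hw'.1 z)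
      _ = 2 := by rw [Finset.sum_add_distrib, hw.2, hw'.2]; norm_num
  calc bhattacharyya w w' ^ 2 = (∑ z, √(max (w z) (w' z)) * √(min (w z) (w' z))) ^ 2 := by
        simp only [bhattacharyya, ← Real.sqrt_mul (hmax _), max_mul_min]
    _ ≤ (∑ z, √(max (w z) (w' z)) ^ 2) * ∑ z, √(min (w z) (w' z)) ^ 2 :=
        Finset.sum_mul_sq_le_sq_mul_sq _ _ _
    _ = (∑ z, max (w z) (w' z)) * affinity w w' := by
        simp only [Real.sq_sqrt (hmax _), Real.sq_sqrt (hmin _), affinity]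
    _ ≤ 2 * affinity w w' := by
        gcongr
        exact Finset.sum_nonneg fun z _ ↦ hmin z

lemma le_affinity_prodWeight {n : ℕ} {w w' : Z → ℝ} (hw : w ∈ stdSimplex ℝ Z)
    (hw' : w' ∈ stdSimplex ℝ Z) (hclose : n * hellingerSq w w' ≤ 2) :
    (1 - n * hellingerSq w w' / 2) ^ 2 / 2 ≤ affinity (prodWeight n w) (prodWeight n w') := by
  have bernoulli : 1 - n * hellingerSq w w' / 2 ≤ bhattacharyya w w' ^ n := by
    have hnonneg : 0 ≤ bhattacharyya w w' := Finset.sum_nonneg fun _ _ ↦ Real.sqrt_nonneg _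
    have hpow := one_add_mul_le_pow (a := bhattacharyya w w' - 1) (by linarith) n
    rw [add_sub_cancel] at hpow
    rw [hellingerSq_eq_two_sub hw hw']
    linarith
  have hsq : (1 - n * hellingerSq w w' / 2) ^ 2 ≤ (bhattacharyya w w' ^ n) ^ 2 :=
    pow_le_pow_left₀ (by linarith) bernoulli 2
  rw [← bhattacharyya_prodWeight n hw.1 hw'.1] at hsq
  linarith [sq_bhattacharyya_le (prodWeight_mem_stdSimplex n hw) (prodWeight_mem_stdSimplex n hw')]

end Hellinger

section Assouad

variable {ι Z : Type*} [Fintype ι] [DecidableEq ι] [Fintype Z] {W : (ι → Bool) → Z → ℝ}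

lemma card_cube : (Fintype.card (ι → Bool) : ℝ) = 2 ^ Fintype.card ι := by simp

/-- Along every edge of the cube the decoder errs on one endpoint or the other, so its two errors
in that coordinate add up to at least the affinity of the endpoints. -/
lemma le_sum_ne_apply {η : ℝ} (e : ι)
    (haff : ∀ σ, η ≤ affinity (W σ) (W (flipAt e σ))) (τ : Z → ι → Bool) :
    η / 2 * 2 ^ Fintype.card ι ≤ ∑ σ, ∑ z, W σ z * if τ z e ≠ σ e then 1 else 0 := by
  set err : (ι → Bool) → ℝ := fun σ ↦ ∑ z, W σ z * if τ z e ≠ σ e then 1 else 0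
  have le_err_add (σ : ι → Bool) : η ≤ err σ + err (flipAt e σ) := by
    refine (haff σ).trans ?_
    rw [affinity, ← Finset.sum_add_distrib]
    refine Finset.sum_le_sum fun z _ ↦ ?_
    rw [flipAt_apply_self]
    cases τ z e <;> cases σ e <;> simp
  have sum_err_flipAt : ∑ σ, err (flipAt e σ) = ∑ σ, err σ :=
    Equiv.sum_comp (flipAt_involutive e).toPerm err
  have hsum := Finset.sum_le_sum fun (σ : ι → Bool) (_ : σ ∈ Finset.univ) ↦ le_err_add σ
  rw [Finset.sum_add_distrib, sum_err_flipAt, Finset.sum_const, nsmul_eq_mul, Finset.card_univ,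
    card_cube] at hsum
  linarith

lemma le_sum_hammingDist {η : ℝ} (haff : ∀ σ e, η ≤ affinity (W σ) (W (flipAt e σ)))
    (τ : Z → ι → Bool) :
    η / 2 * Fintype.card ι * 2 ^ Fintype.card ι ≤
      ∑ σ, ∑ z, W σ z * hammingDist (τ z) σ := by
  calc η / 2 * Fintype.card ι * 2 ^ Fintype.card ι
      = ∑ _e : ι, η / 2 * 2 ^ Fintype.card ι := by
        rw [Finset.sum_const, nsmul_eq_mul, Finset.card_univ]
        ring
    _ ≤ ∑ e, ∑ σ, ∑ z, W σ z * if τ z e ≠ σ e then 1 else 0 :=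
        Finset.sum_le_sum fun e _ ↦ le_sum_ne_apply e (fun σ ↦ haff σ e) τ
    _ = ∑ σ, ∑ z, W σ z * hammingDist (τ z) σ := by
        rw [Finset.sum_comm]
        refine Finset.sum_congr rfl fun σ _ ↦ ?_
        rw [Finset.sum_comm]
        simp only [← Finset.mul_sum, Finset.sum_boole, hammingDist]

lemma sum_mul_le_mul_sum_filter_add {w : Z → ℝ} (hw : w ∈ stdSimplex ℝ Z) {d : Z → ℝ} {N θ : ℝ}
    (hN : 0 ≤ N) (hθ : 0 ≤ θ) (hd : ∀ z, d z ≤ N) :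
    ∑ z, w z * d z ≤ N * (∑ z with θ * N ≤ d z, w z + θ) := by
  calc ∑ z, w z * d z ≤ ∑ z, (N * (if θ * N ≤ d z then w z else 0) + N * θ * w z) := by
        refine Finset.sum_le_sum fun z _ ↦ ?_
        have hwz := hw.1 z
        split_ifs with hfar
        · nlinarith [hd z, mul_nonneg (mul_nonneg hN hθ) hwz]
        · nlinarith
    _ = N * (∑ z with θ * N ≤ d z, w z + θ) := by
        rw [Finset.sum_add_distrib, ← Finset.mul_sum, ← Finset.mul_sum, hw.2, Finset.sum_filter]
        ring

lemma exists_notMem_le_sum_hammingDist [Nonempty ι] (hW : ∀ σ, W σ ∈ stdSimplex ℝ Z)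
    {η θ β : ℝ} (hθ : 0 ≤ θ) (hη : θ + β < η / 2)
    (haff : ∀ σ e, η ≤ affinity (W σ) (W (flipAt e σ))) (τ : Z → ι → Bool)
    {bad : Finset (ι → Bool)} (hbad : #bad ≤ β * 2 ^ Fintype.card ι) :
    ∃ σ ∉ bad, η / 2 - θ - β ≤
      ∑ z with θ * Fintype.card ι ≤ hammingDist (τ z) σ, W σ z := by
  set N : ℝ := (Fintype.card ι : ℝ)
  set far : (ι → Bool) → ℝ := fun σ ↦ ∑ z with θ * N ≤ hammingDist (τ z) σ, W σ z
  have far_le_one (σ : ι → Bool) : far σ ≤ 1 :=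
    (Finset.sum_le_sum_of_subset_of_nonneg (Finset.filter_subset _ _)
      fun z _ _ ↦ (hW σ).1 z).trans (hW σ).2.le
  have le_sum_far : (η / 2 - θ) * 2 ^ Fintype.card ι ≤ ∑ σ, far σ := by
    have hN : 0 < N := Nat.cast_pos.2 Fintype.card_pos
    have hsum : ∑ σ, ∑ z, W σ z * hammingDist (τ z) σ ≤ ∑ σ, N * (far σ + θ) :=
      Finset.sum_le_sum fun σ _ ↦ sum_mul_le_mul_sum_filter_add (hW σ) hN.le hθ
        fun z ↦ Nat.cast_le.2 hammingDist_le_card_fintype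
    rw [← Finset.mul_sum, Finset.sum_add_distrib, Finset.sum_const, nsmul_eq_mul,
      Finset.card_univ, card_cube] at hsum
    have hassouad := (le_sum_hammingDist haff τ).trans hsum
    refine le_of_mul_le_mul_left ?_ hN
    linarith
  obtain ⟨σ, -, hσ⟩ : ∃ σ ∈ Finset.univ,
      η / 2 - θ - β ≤ far σ - if σ ∈ bad then 1 else 0 := by
    refine Finset.exists_le_of_sum_le Finset.univ_nonempty ?_
    rw [Finset.sum_const, nsmul_eq_mul, Finset.card_univ, card_cube, Finset.sum_sub_distrib,
      Finset.sum_boole, Finset.filter_univ_mem]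
    linarith
  by_cases hmem : σ ∈ bad
  · rw [if_pos hmem] at hσ
    linarith [far_le_one σ]
  · rw [if_neg hmem, sub_zero] at hσ
    exact ⟨σ, hmem, hσ⟩

end Assouad

section Truncation

variable {I J : Type*}

/-- The entrywise projection of a matrix onto the interval `[-b, b]`. -/
def truncate (b : ℝ) (A : Matrix I J ℝ) : Matrix I J ℝ := A.map fun x ↦ max (-b) (min b x)

lemma abs_truncate_apply_le {b : ℝ} (hb : 0 ≤ b) (A : Matrix I J ℝ) (i : I) (j : J) :
    |truncate b A i j| ≤ b :=
  abs_le.2 ⟨le_max_left _ _, max_le (by linarith) (min_le_left _ _)⟩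

lemma truncate_eq_self {b : ℝ} {A : Matrix I J ℝ} (hA : ∀ i j, |A i j| ≤ b) :
    truncate b A = A := by
  ext i j
  obtain ⟨hlower, hupper⟩ := abs_le.1 (hA i j)
  simp [truncate, hlower, hupper]

end Truncation

section FrobeniusNorm

open scoped Matrix Matrix.Norms.Frobenius

variable {I J V V' : Type*} [Fintype I] [Fintype J] [Fintype V] [Fintype V']

lemma frobenius_norm_sq (A : Matrix I J ℝ) : ‖A‖ ^ 2 = ∑ i, ∑ j, A i j ^ 2 := by
  rw [Matrix.frobenius_norm_def, ← Real.rpow_natCast,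
    ← Real.rpow_mul (Finset.sum_nonneg fun i _ ↦ Finset.sum_nonneg fun j _ ↦ by positivity)]
  simp

lemma hsNormSq_eq_norm_sq {m : ℕ} (S : Matrix (Fin m) (Fin m) ℝ) : hsNormSq S = ‖S‖ ^ 2 :=
  (frobenius_norm_sq S).symm

lemma frobenius_norm_sq_eq_trace (A : Matrix I J ℝ) : ‖A‖ ^ 2 = (A * Aᵀ).trace := by
  rw [frobenius_norm_sq]
  simp only [Matrix.trace, Matrix.diag_apply, Matrix.mul_apply, Matrix.transpose_apply, sq]

lemma frobenius_norm_sq_add (A B : Matrix I J ℝ) :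
    ‖A + B‖ ^ 2 = ‖A‖ ^ 2 + 2 * (A * Bᵀ).trace + ‖B‖ ^ 2 := by
  have trace_comm : (B * Aᵀ).trace = (A * Bᵀ).trace := by
    rw [← Matrix.trace_transpose, Matrix.transpose_mul, Matrix.transpose_transpose]
  simp only [frobenius_norm_sq_eq_trace, Matrix.transpose_add, Matrix.add_mul, Matrix.mul_add,
    Matrix.trace_add, trace_comm]
  ring

lemma frobenius_norm_mul_of_mul_transpose_eq_one [DecidableEq J] (B : Matrix I J ℝ)
    {D : Matrix J V ℝ} (hD : D * Dᵀ = 1) : ‖B * D‖ = ‖B‖ := by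
  rw [← pow_left_inj₀ (norm_nonneg _) (norm_nonneg _) two_ne_zero, frobenius_norm_sq_eq_trace,
    frobenius_norm_sq_eq_trace, Matrix.transpose_mul, Matrix.mul_assoc, ← Matrix.mul_assoc D, hD,
    Matrix.one_mul]

lemma frobenius_norm_transpose_mul_mul [DecidableEq I] [DecidableEq J] {A : Matrix I V ℝ}
    {D : Matrix J V' ℝ} (hA : A * Aᵀ = 1) (hD : D * Dᵀ = 1) (B : Matrix I J ℝ) :
    ‖Aᵀ * B * D‖ = ‖B‖ := by
  rw [frobenius_norm_mul_of_mul_transpose_eq_one _ hD, ← Matrix.frobenius_norm_transpose,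
    Matrix.transpose_mul, Matrix.transpose_transpose,
    frobenius_norm_mul_of_mul_transpose_eq_one _ hA, Matrix.frobenius_norm_transpose]

lemma frobenius_norm_sq_smul (κ : ℝ) (A : Matrix I J ℝ) : ‖κ • A‖ ^ 2 = κ ^ 2 * ‖A‖ ^ 2 := by
  rw [norm_smul, mul_pow, Real.norm_eq_abs, sq_abs]

lemma frobenius_norm_sq_vecMulVec (x : I → ℝ) (y : J → ℝ) :
    ‖Matrix.vecMulVec x y‖ ^ 2 = (∑ i, x i ^ 2) * ∑ j, y j ^ 2 := by
  simp only [frobenius_norm_sq, Matrix.vecMulVec_apply, mul_pow, ← Finset.mul_sum,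
    ← Finset.sum_mul]

lemma norm_truncate_sub_truncate_le (b : ℝ) (A B : Matrix I J ℝ) :
    ‖truncate b A - truncate b B‖ ≤ ‖A - B‖ := by
  have clip_lipschitz (x y : ℝ) : |max (-b) (min b x) - max (-b) (min b y)| ≤ |x - y| := by
    rw [max_comm, max_comm (-b), min_comm, min_comm b y]
    exact (abs_max_sub_max_le_abs _ _ _).trans (by simpa using abs_min_sub_min_le_max x b y b)
  rw [← pow_le_pow_iff_left₀ (norm_nonneg _) (norm_nonneg _) two_ne_zero, frobenius_norm_sq,
    frobenius_norm_sq]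
  exact Finset.sum_le_sum fun i _ ↦ Finset.sum_le_sum fun j _ ↦
    sq_le_sq.2 (clip_lipschitz (A i j) (B i j))

end FrobeniusNorm

section DiscreteMeasure

variable {Z : Type*} [Fintype Z] [MeasurableSpace Z]

/-- The measure with the given weights as point masses. -/
def weightMeasure (w : Z → ℝ) : Measure Z := ∑ z, ENNReal.ofReal (w z) • Measure.dirac z

variable [MeasurableSingletonClass Z] {w : Z → ℝ}

lemma weightMeasure_singleton (w : Z → ℝ) (z : Z) :
    weightMeasure w {z} = ENNReal.ofReal (w z) := by
  classical
  simp [weightMeasure, Measure.finsetSum_apply, Set.indicator_apply]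

lemma weightMeasure_coe_finset (hw : 0 ≤ w) (s : Finset Z) :
    weightMeasure w s = ENNReal.ofReal (∑ z ∈ s, w z) := by
  simp only [← sum_measure_singleton, ENNReal.ofReal_sum_of_nonneg fun z _ ↦ hw z,
    weightMeasure_singleton]

lemma isProbabilityMeasure_weightMeasure (hw : w ∈ stdSimplex ℝ Z) :
    IsProbabilityMeasure (weightMeasure w) :=
  ⟨by rw [← Finset.coe_univ, weightMeasure_coe_finset hw.1, hw.2, ENNReal.ofReal_one]⟩

lemma integral_weightMeasure (hw : w ∈ stdSimplex ℝ Z) (f : Z → ℝ) :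
    ∫ z, f z ∂weightMeasure w = ∑ z, w z * f z := by
  have := isProbabilityMeasure_weightMeasure hw
  simp only [integral_fintype (Integrable.of_finite (f := f)), measureReal_def,
    weightMeasure_singleton, ENNReal.toReal_ofReal (hw.1 _), smul_eq_mul]

lemma pi_weightMeasure_coe_finset (hw : w ∈ stdSimplex ℝ Z) {n : ℕ} (s : Finset (Fin n → Z)) :
    (Measure.pi fun _ : Fin n ↦ weightMeasure w) (s : Set (Fin n → Z)) =
      ENNReal.ofReal (∑ z ∈ s, prodWeight n w z) := by
  have := isProbabilityMeasure_weightMeasure hw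
  rw [← sum_measure_singleton,
    ENNReal.ofReal_sum_of_nonneg fun z _ ↦ (prodWeight_mem_stdSimplex n hw).1 z]
  refine Finset.sum_congr rfl fun z _ ↦ ?_
  rw [Measure.pi_singleton, prodWeight, ENNReal.ofReal_prod_of_nonneg fun i _ ↦ hw.1 _]
  simp only [weightMeasure_singleton]

end DiscreteMeasure

section BinaryResponse

open scoped Matrix.Norms.Frobenius

variable {m : ℕ} {a : ℝ} {T T' : Matrix (Fin m) (Fin m) ℝ}

/-- The law of `(X, X', b)` when `(X, X')` is uniform and, given `(X, X') = (u, v)`, the response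
`a * boolSign b` takes the values `±a` and has mean `T u v`. -/
def binaryWeight (a : ℝ) (T : Matrix (Fin m) (Fin m) ℝ) (z : Fin m × Fin m × Bool) : ℝ :=
  (1 + boolSign z.2.2 * (T z.1 z.2.1 / a)) / (2 * (m : ℝ) ^ 2)

/-- The observation encoded by a pair of vertices and the sign of the response. -/
def signedObs (a : ℝ) (z : Fin m × Fin m × Bool) : Obs m := (z.1, z.2.1, a * boolSign z.2.2)

/-- The sampling distribution with regression kernel `T` and responses `±a`. -/
def binaryMeasure (a : ℝ) (T : Matrix (Fin m) (Fin m) ℝ) : Measure (Obs m) :=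
  (weightMeasure (binaryWeight a T)).map (signedObs a)

lemma measurable_signedObs (a : ℝ) : Measurable (signedObs (m := m) a) :=
  measurable_of_countable _

lemma sum_binaryWeight (a : ℝ) (T : Matrix (Fin m) (Fin m) ℝ) (u v : Fin m) :
    ∑ b, binaryWeight a T (u, v, b) = ((m : ℝ) ^ 2)⁻¹ := by
  simp only [binaryWeight, boolSign, Fintype.sum_bool, if_true, Bool.false_eq_true, if_false]
  ring

lemma le_binaryWeight (ha : 0 < a) (hT : ∀ u v, |T u v| ≤ a / 2) (z : Fin m × Fin m × Bool) :
    1 / (4 * (m : ℝ) ^ 2) ≤ binaryWeight a T z := by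
  have habs : |boolSign z.2.2 * (T z.1 z.2.1 / a)| ≤ 1 / 2 := by
    rw [abs_mul, abs_boolSign, one_mul, abs_div, abs_of_pos ha, div_le_iff₀ ha]
    linarith [hT z.1 z.2.1]
  calc 1 / (4 * (m : ℝ) ^ 2) = (1 / 2) / (2 * (m : ℝ) ^ 2) := by ring
    _ ≤ binaryWeight a T z := by
        rw [binaryWeight]
        gcongr
        linarith [neg_le_of_abs_le habs]

lemma binaryWeight_mem_stdSimplex [NeZero m] (ha : 0 < a) (hT : ∀ u v, |T u v| ≤ a / 2) :
    binaryWeight a T ∈ stdSimplex ℝ (Fin m × Fin m × Bool) := by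
  have hm : (m : ℝ) ≠ 0 := Nat.cast_ne_zero.2 (NeZero.ne m)
  refine ⟨fun z ↦ le_trans (by positivity) (le_binaryWeight ha hT z), ?_⟩
  simp only [Fintype.sum_prod_type, sum_binaryWeight, Finset.sum_const, Finset.card_univ,
    Fintype.card_fin, nsmul_eq_mul]
  field_simp

lemma sq_sqrt_sub_sqrt_le {x y c : ℝ} (hc : 0 < c) (hx : c ≤ x) (hy : c ≤ y) :
    (√x - √y) ^ 2 ≤ (x - y) ^ 2 / (4 * c) := by
  have hsum : 4 * c ≤ (√x + √y) ^ 2 := by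
    have hsqrt_x := Real.sqrt_le_sqrt hx
    have hsqrt_y := Real.sqrt_le_sqrt hy
    calc 4 * c = (√c + √c) ^ 2 := by rw [← two_mul, mul_pow, Real.sq_sqrt hc.le]; norm_num
      _ ≤ (√x + √y) ^ 2 := by gcongr
  rw [le_div_iff₀ (by positivity)]
  calc (√x - √y) ^ 2 * (4 * c) ≤ (√x - √y) ^ 2 * (√x + √y) ^ 2 := by gcongr
    _ = (√x ^ 2 - √y ^ 2) ^ 2 := by ring
    _ = (x - y) ^ 2 := by
        rw [Real.sq_sqrt (hc.le.trans hx), Real.sq_sqrt (hc.le.trans hy)]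

lemma hellingerSq_binaryWeight_le [NeZero m] (ha : 0 < a) (hT : ∀ u v, |T u v| ≤ a / 2)
    (hT' : ∀ u v, |T' u v| ≤ a / 2) :
    hellingerSq (binaryWeight a T) (binaryWeight a T') ≤
      ‖T - T'‖ ^ 2 / (2 * a ^ 2 * (m : ℝ) ^ 2) := by
  have hm : 0 < (m : ℝ) := Nat.cast_pos.2 (NeZero.pos m)
  have pointwise (z : Fin m × Fin m × Bool) :
      (√(binaryWeight a T z) - √(binaryWeight a T' z)) ^ 2 ≤
        (T - T') z.1 z.2.1 ^ 2 / (4 * a ^ 2 * (m : ℝ) ^ 2) := by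
    have hdiff : binaryWeight a T z - binaryWeight a T' z =
        boolSign z.2.2 * ((T - T') z.1 z.2.1 / (2 * a * (m : ℝ) ^ 2)) := by
      simp only [binaryWeight, Matrix.sub_apply]
      field_simp
      ring
    refine (sq_sqrt_sub_sqrt_le (by positivity) (le_binaryWeight ha hT z)
      (le_binaryWeight ha hT' z)).trans_eq ?_
    rw [hdiff, mul_pow, boolSign_sq]
    field_simp
    norm_num
  refine (Finset.sum_le_sum fun z _ ↦ pointwise z).trans_eq ?_
  simp only [Fintype.sum_prod_type, frobenius_norm_sq, Finset.sum_const, Finset.card_univ,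
    Fintype.card_bool, nsmul_eq_mul, Finset.sum_div]
  refine Finset.sum_congr rfl fun u _ ↦ Finset.sum_congr rfl fun v _ ↦ ?_
  push_cast
  ring

lemma measurableSet_design_eq (u v : Fin m) : MeasurableSet {z : Obs m | z.1 = u ∧ z.2.1 = v} :=
  (measurable_fst (measurableSet_singleton u)).inter
    (measurable_fst.comp measurable_snd (measurableSet_singleton v))

lemma isProbabilityMeasure_binaryMeasure [NeZero m] (ha : 0 < a) (hT : ∀ u v, |T u v| ≤ a / 2) :
    IsProbabilityMeasure (binaryMeasure a T) := by
  have := isProbabilityMeasure_weightMeasure (binaryWeight_mem_stdSimplex ha hT)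
  exact Measure.isProbabilityMeasure_map (measurable_signedObs a).aemeasurable

lemma uniformDesign_binaryMeasure [NeZero m] (ha : 0 < a) (hT : ∀ u v, |T u v| ≤ a / 2) :
    UniformDesign m (binaryMeasure a T) := fun u v ↦ by
  have preimage_eq : signedObs a ⁻¹' {z : Obs m | z.1 = u ∧ z.2.1 = v} =
      (({u} ×ˢ {v} ×ˢ Finset.univ : Finset (Fin m × Fin m × Bool)) : Set _) := by
    ext ⟨x, y, b⟩
    cases b <;> simp [signedObs]
  have hm : 0 < (m : ℝ) := Nat.cast_pos.2 (NeZero.pos m)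
  rw [binaryMeasure, Measure.map_apply (measurable_signedObs a) (measurableSet_design_eq u v),
    preimage_eq, weightMeasure_coe_finset (binaryWeight_mem_stdSimplex ha hT).1]
  simp only [Finset.sum_product, Finset.sum_singleton, sum_binaryWeight]
  rw [ENNReal.ofReal_inv_of_pos (by positivity), ENNReal.ofReal_pow hm.le, ENNReal.ofReal_natCast]

lemma ae_abs_le_binaryMeasure (ha : 0 < a) : ∀ᵐ z ∂binaryMeasure a T, |z.2.2| ≤ a := by
  rw [binaryMeasure, ae_map_iff (measurable_signedObs a).aemeasurable
    (measurableSet_le (by fun_prop) measurable_const)]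
  exact .of_forall fun z ↦ by simp [signedObs, abs_mul, abs_boolSign, abs_of_pos ha]

lemma regKernel_binaryMeasure [NeZero m] (ha : 0 < a) (hT : ∀ u v, |T u v| ≤ a / 2) :
    regKernel m (binaryMeasure a T) = T := by
  have hm : (m : ℝ) ≠ 0 := Nat.cast_ne_zero.2 (NeZero.ne m)
  ext u v
  have hmeas : Measurable fun z : Obs m ↦ if z.1 = u ∧ z.2.1 = v then z.2.2 else 0 :=
    Measurable.ite (measurableSet_design_eq u v) (by fun_prop) measurable_const
  have sum_response (x y : Fin m) : ∑ b, binaryWeight a T (x, y, b) *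
      (if x = u ∧ y = v then a * boolSign b else 0) =
        if y = v then if x = u then T u v / (m : ℝ) ^ 2 else 0 else 0 := by
    split_ifs <;> simp_all [binaryWeight, boolSign]
    field_simp
    ring
  rw [regKernel, Matrix.of_apply, binaryMeasure,
    integral_map (measurable_signedObs a).aemeasurable hmeas.aestronglyMeasurable,
    integral_weightMeasure (binaryWeight_mem_stdSimplex ha hT)]
  change (m : ℝ) ^ 2 * ∑ z, binaryWeight a T z *
    (if z.1 = u ∧ z.2.1 = v then a * boolSign z.2.2 else 0) = T u v
  simp only [Fintype.sum_prod_type, sum_response, Finset.sum_ite_eq', Finset.mem_univ,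
    if_true]
  field_simp

lemma ofReal_sum_prodWeight_le_pi_binaryMeasure [NeZero m] (ha : 0 < a)
    (hT : ∀ u v, |T u v| ≤ a / 2) {n : ℕ} {s : Finset (Fin n → Fin m × Fin m × Bool)}
    {B : Set (Fin n → Obs m)} (hs : ∀ z ∈ s, (fun i ↦ signedObs a (z i)) ∈ B) :
    ENNReal.ofReal (∑ z ∈ s, prodWeight n (binaryWeight a T) z) ≤
      (Measure.pi fun _ ↦ binaryMeasure a T) B := by
  have hw := binaryWeight_mem_stdSimplex ha hT
  have := isProbabilityMeasure_weightMeasure hw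
  have hprob := isProbabilityMeasure_binaryMeasure ha hT
  rw [← pi_weightMeasure_coe_finset hw]
  unfold binaryMeasure at hprob ⊢
  rw [← Measure.pi_map_pi fun _ ↦ (measurable_signedObs a).aemeasurable]
  exact (measure_mono fun z hz ↦ hs z hz).trans
    (Measure.le_map_apply (measurable_of_countable _).aemeasurable B)

end BinaryResponse

section HypercubeReduction

open scoped Matrix.Norms.Frobenius

variable {m n r : ℕ} {ρ a E : ℝ} {lam : ℕ → ℝ} {φ : ℕ → Fin m → ℝ} {ι : Type*} [Fintype ι]
  [DecidableEq ι] {S : (ι → Bool) → Matrix (Fin m) (Fin m) ℝ}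

/-- A family of kernels indexed by a cube that Assouad's method turns into the lower bound `E` for
the squared Hilbert–Schmidt error: neighbours are indistinguishable from `n` observations, distances
grow linearly with the Hamming distance, and all but a fraction `1/20` of the kernels have entries
small enough to be conditional means of responses `±a`. -/
structure IsHardCube (n r : ℕ) (ρ a E : ℝ) (lam : ℕ → ℝ) (φ : ℕ → Fin m → ℝ)
    (S : (ι → Bool) → Matrix (Fin m) (Fin m) ℝ) : Prop where
  isSymm : ∀ σ, (S σ).IsSymm
  rank_le : ∀ σ, (S σ).rank ≤ r
  sobolevHSSq_le : ∀ σ, sobolevHSSq lam φ (S σ) ≤ ρ ^ 2 * (m : ℝ) ^ 2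
  hsNormSq_sub_flipAt_le :
    ∀ σ e, 5 * n * hsNormSq (S σ - S (flipAt e σ)) ≤ a ^ 2 * (m : ℝ) ^ 2
  le_hsNormSq_sub :
    ∀ σ σ', 80 * E * hammingDist σ σ' ≤ Fintype.card ι * hsNormSq (S σ - S σ')
  card_large_le : (#{σ | ∃ u v, a / 2 < |S σ u v|} : ℝ) ≤ 2 ^ Fintype.card ι / 20

lemma IsHardCube.two_fifths_le_affinity [NeZero m] (h : IsHardCube n r ρ a E lam φ S)
    (ha : 0 < a) (σ : ι → Bool) (e : ι) :
    2 / 5 ≤ affinity (prodWeight n (binaryWeight a (truncate (a / 2) (S σ))))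
      (prodWeight n (binaryWeight a (truncate (a / 2) (S (flipAt e σ))))) := by
  have hm : 0 < (m : ℝ) := Nat.cast_pos.2 (NeZero.pos m)
  have hbdd (σ : ι → Bool) := abs_truncate_apply_le (half_pos ha).le (S σ)
  have hclose : n * hellingerSq (binaryWeight a (truncate (a / 2) (S σ)))
      (binaryWeight a (truncate (a / 2) (S (flipAt e σ)))) ≤ 1 / 10 :=
    calc _ ≤ n * (‖truncate (a / 2) (S σ) - truncate (a / 2) (S (flipAt e σ))‖ ^ 2 /
            (2 * a ^ 2 * (m : ℝ) ^ 2)) := by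
          gcongr
          exact hellingerSq_binaryWeight_le ha (hbdd _) (hbdd _)
      _ ≤ n * (‖S σ - S (flipAt e σ)‖ ^ 2 / (2 * a ^ 2 * (m : ℝ) ^ 2)) := by
          gcongr
          exact norm_truncate_sub_truncate_le _ _ _
      _ ≤ 1 / 10 := by
          rw [← hsNormSq_eq_norm_sq, ← mul_div_assoc, div_le_iff₀ (by positivity)]
          linarith [h.hsNormSq_sub_flipAt_le σ e]
  refine le_trans ?_ (le_affinity_prodWeight (binaryWeight_mem_stdSimplex ha (hbdd σ))
    (binaryWeight_mem_stdSimplex ha (hbdd (flipAt e σ))) (by linarith))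
  nlinarith

/-- The nearest kernel of the cube is a decoder that is far from `σ` only if the estimate is. -/
lemma IsHardCube.le_hsNormSq_sub_of_far [Nonempty ι] (h : IsHardCube n r ρ a E lam φ S)
    (hE : 0 ≤ E) {A : Matrix (Fin m) (Fin m) ℝ} {σ τ : ι → Bool}
    (hτ : ‖A - S τ‖ ≤ ‖A - S σ‖) (hfar : 1 / 20 * Fintype.card ι ≤ (hammingDist τ σ : ℝ)) :
    E ≤ hsNormSq (A - S σ) := by
  have hN : 0 < (Fintype.card ι : ℝ) := Nat.cast_pos.2 Fintype.card_pos
  have hsep : 4 * E ≤ ‖S τ - S σ‖ ^ 2 := by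
    rw [← hsNormSq_eq_norm_sq]
    refine le_of_mul_le_mul_left (le_trans ?_ (h.le_hsNormSq_sub τ σ)) hN
    nlinarith
  have htriangle : ‖S τ - S σ‖ ≤ 2 * ‖A - S σ‖ := by
    have hsub := norm_sub_le (A - S σ) (A - S τ)
    rw [sub_sub_sub_cancel_left] at hsub
    linarith
  have hsq := pow_le_pow_left₀ (norm_nonneg _) htriangle 2
  rw [hsNormSq_eq_norm_sq]
  linarith

theorem IsHardCube.exists_memP_ofReal_le [NeZero m] [Nonempty ι]
    (h : IsHardCube n r ρ a E lam φ S) (ha : 0 < a) (hE : 0 ≤ E)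
    (Shat : (Fin n → Obs m) → Matrix (Fin m) (Fin m) ℝ) :
    ∃ P, MemP m r ρ a lam φ P ∧ ENNReal.ofReal (1 / 10) ≤
      (Measure.pi fun _ : Fin n ↦ P) {ω | E ≤ hsNormSq (Shat ω - regKernel m P)} := by
  have hbdd (σ : ι → Bool) := abs_truncate_apply_le (half_pos ha).le (S σ)
  choose decode hdecode using fun z : Fin n → Fin m × Fin m × Bool ↦
    Finite.exists_min fun τ ↦ ‖Shat (fun i ↦ signedObs a (z i)) - S τ‖
  obtain ⟨σ, hσ, hprob⟩ := exists_notMem_le_sum_hammingDist (θ := 1 / 20) (β := 1 / 20)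
    (fun σ ↦ prodWeight_mem_stdSimplex n (binaryWeight_mem_stdSimplex ha (hbdd σ)))
    (by norm_num) (by norm_num) (h.two_fifths_le_affinity ha) decode
    (h.card_large_le.trans_eq (by ring))
  have hσ_bdd : ∀ u v, |S σ u v| ≤ a / 2 := by simpa using hσ
  have hreg := regKernel_binaryMeasure ha hσ_bdd
  refine ⟨binaryMeasure a (S σ), ⟨isProbabilityMeasure_binaryMeasure ha hσ_bdd,
    uniformDesign_binaryMeasure ha hσ_bdd, ae_abs_le_binaryMeasure ha, ?_, ?_, ?_⟩, ?_⟩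
  · rw [hreg]
    exact h.isSymm σ
  · rw [hreg]
    exact h.rank_le σ
  · rw [hreg]
    exact h.sobolevHSSq_le σ
  · rw [truncate_eq_self hσ_bdd] at hprob
    refine (ENNReal.ofReal_le_ofReal (le_trans (by norm_num) hprob)).trans
      (ofReal_sum_prodWeight_le_pi_binaryMeasure ha hσ_bdd fun z hz ↦ ?_)
    rw [Set.mem_ofPred_eq, hreg]
    exact h.le_hsNormSq_sub_of_far hE (hdecode z σ) (Finset.mem_filter.1 hz).2

end HypercubeReduction

section MomentBounds

variable {ι V : Type*} [Fintype ι] [Fintype V] {q b : ℝ}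

lemma le_of_sum_rpow_le {x : V → ℝ} (hx : ∀ v, 0 ≤ x v) (hq : 0 < q) (hb : 0 ≤ b)
    (hmoment : ∑ v, x v ^ q ≤ b ^ q) (v : V) : x v ≤ b :=
  (Real.rpow_le_rpow_iff (hx v) hb hq).1 <| (Finset.single_le_sum (f := fun v ↦ x v ^ q)
    (fun w _ ↦ Real.rpow_nonneg (hx w) q) (Finset.mem_univ v)).trans hmoment

lemma sum_rpow_sum_le {y : V → ι → ℝ} (hy : ∀ v i, 0 ≤ y v i) (hq : 1 ≤ q) (hb : 0 ≤ b)
    (hmoment : ∀ i, ∑ v, y v i ^ q ≤ b ^ q) :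
    ∑ v, (∑ i, y v i) ^ q ≤ (Fintype.card ι * b) ^ q :=
  calc ∑ v, (∑ i, y v i) ^ q
      ≤ ∑ v, (Fintype.card ι : ℝ) ^ (q - 1) * ∑ i, y v i ^ q :=
        Finset.sum_le_sum fun v _ ↦
          Real.rpow_sum_le_const_mul_sum_rpow_of_nonneg _ hq fun i _ ↦ hy v i
    _ = (Fintype.card ι : ℝ) ^ (q - 1) * ∑ i, ∑ v, y v i ^ q := by
        rw [← Finset.mul_sum, Finset.sum_comm]
    _ ≤ (Fintype.card ι : ℝ) ^ (q - 1) * ∑ _i : ι, b ^ q := by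
        gcongr with i
        exact hmoment i
    _ = (Fintype.card ι * b) ^ q := by
        rw [Real.mul_rpow (Nat.cast_nonneg _) hb, ← add_sub_cancel 1 q,
          Real.rpow_one_add' (Nat.cast_nonneg _) (by linarith), add_sub_cancel, Finset.sum_const,
          Finset.card_univ, nsmul_eq_mul]
        ring

lemma card_exists_lt_sq_sum_boolSign_le_of_forall_moment [DecidableEq ι] [Nonempty ι]
    (x : V → ι → ℝ) (hq : 1 ≤ q) (hb : 0 < b) (hmoment : ∀ i, ∑ v, (x v i ^ 2) ^ q ≤ b ^ q) :
    (#{σ : ι → Bool | ∃ v, 80 * q * (Fintype.card ι * b) < (∑ i, boolSign (σ i) * x v i) ^ 2} : ℝ)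
      ≤ 2 ^ Fintype.card ι / 20 :=
  card_exists_lt_sq_sum_boolSign_le_of_moment x hq (by positivity)
    (sum_rpow_sum_le (fun v i ↦ sq_nonneg (x v i)) hq hb.le hmoment)

end MomentBounds

section SpikedCube

open scoped Matrix Matrix.Norms.Frobenius

lemma one_le_sqrt_card {ι : Type*} [Fintype ι] [Nonempty ι] : 1 ≤ √(Fintype.card ι : ℝ) :=
  Real.one_le_sqrt.2 (Nat.one_le_cast.2 Fintype.card_pos)

variable {ι V : Type*} [Fintype ι] [DecidableEq ι]

/-- The sign vector of `σ` with an additional spike at the coordinate `o`. Without the spike the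
rank-one matrix built from it could not tell `σ` from its antipode. -/
def spikedSign (o : ι) (σ : ι → Bool) (i : ι) : ℝ :=
  boolSign (σ i) + if i = o then 2 * √(Fintype.card ι) else 0

/-- The rank-one kernel whose coordinates in the system of rows of `Φ` are the products of the
entries of a spiked sign vector. -/
def spikedKernel (κ : ℝ) (Φ : Matrix ι V ℝ) (o : ι) (σ : ι → Bool) : Matrix V V ℝ :=
  κ • (Φᵀ * Matrix.vecMulVec (spikedSign o σ) (spikedSign o σ) * Φ)

lemma sum_spikedSign_sq_le (o : ι) (σ : ι → Bool) :
    ∑ i, spikedSign o σ i ^ 2 ≤ 9 * Fintype.card ι := by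
  have : Nonempty ι := ⟨o⟩
  have hsqrt := one_le_sqrt_card (ι := ι)
  have hsq : √(Fintype.card ι : ℝ) ^ 2 = Fintype.card ι := Real.sq_sqrt (Nat.cast_nonneg _)
  have hsign := (abs_le.1 (abs_boolSign (σ o)).le).2
  have sq_eq (i : ι) : spikedSign o σ i ^ 2 =
      1 + if i = o then 4 * boolSign (σ o) * √(Fintype.card ι) + 4 * Fintype.card ι else 0 := by
    unfold spikedSign
    split_ifs with hi
    · subst hi
      linear_combination boolSign_sq (σ i) + 4 * hsq
    · simp [boolSign_sq]
  simp only [sq_eq, Finset.sum_add_distrib, Finset.sum_ite_eq', Finset.mem_univ, if_true,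
    Finset.sum_const, Finset.card_univ, nsmul_eq_mul, mul_one]
  nlinarith

lemma sum_sq_spikedSign_sub_flipAt (o : ι) (σ : ι → Bool) (e : ι) :
    ∑ i, (spikedSign o σ i - spikedSign o (flipAt e σ) i) ^ 2 = 4 := by
  simp only [spikedSign, add_sub_add_right_eq_sub, sum_sq_boolSign_sub, hammingDist_flipAt]
  norm_num

lemma card_mul_sq_boolSign_sub_le (o : ι) (σ σ' : ι → Bool) (j : ι) :
    Fintype.card ι * (boolSign (σ j) - boolSign (σ' j)) ^ 2 ≤
      (spikedSign o σ o * spikedSign o σ j - spikedSign o σ' o * spikedSign o σ' j) ^ 2 := by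
  have : Nonempty ι := ⟨o⟩
  have hsqrt := one_le_sqrt_card (ι := ι)
  rw [← Real.sq_sqrt (Nat.cast_nonneg (α := ℝ) (Fintype.card ι))]
  simp only [spikedSign, if_true]
  generalize √(Fintype.card ι : ℝ) = t at hsqrt
  by_cases hj : j = o
  · subst hj
    cases σ j <;> cases σ' j <;> norm_num [boolSign] <;> nlinarith
  · have hsign := (abs_le.1 (abs_boolSign (σ o)).le).1
    have hsign' := (abs_le.1 (abs_boolSign (σ' o)).le).1
    generalize boolSign (σ o) = s at hsign
    generalize boolSign (σ' o) = s' at hsign'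
    simp only [if_neg hj]
    cases σ j <;> cases σ' j <;> norm_num [boolSign] <;> nlinarith

lemma sq_sum_spikedSign_mul_le (o : ι) (σ : ι → Bool) {x : ι → ℝ} {b : ℝ}
    (hx : ∀ i, x i ^ 2 ≤ b) :
    (∑ i, spikedSign o σ i * x i) ^ 2 ≤ 9 * (Fintype.card ι : ℝ) ^ 2 * b :=
  calc (∑ i, spikedSign o σ i * x i) ^ 2
      ≤ (∑ i, spikedSign o σ i ^ 2) * ∑ i, x i ^ 2 := Finset.sum_mul_sq_le_sq_mul_sq _ _ _
    _ ≤ 9 * Fintype.card ι * ∑ _i : ι, b := by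
        gcongr with i
        · exact sum_spikedSign_sq_le o σ
        · exact hx i
    _ = 9 * (Fintype.card ι : ℝ) ^ 2 * b := by
        rw [Finset.sum_const, Finset.card_univ, nsmul_eq_mul]
        ring

lemma sq_sum_spikedSign_mul_le_of_sq_sum_boolSign_le {o : ι} {σ : ι → Bool} {x : ι → ℝ}
    {q b : ℝ} (hq : 1 ≤ q) (hx : x o ^ 2 ≤ b)
    (hsum : (∑ i, boolSign (σ i) * x i) ^ 2 ≤ 80 * q * (Fintype.card ι * b)) :
    (∑ i, spikedSign o σ i * x i) ^ 2 ≤ 120 * q * Fintype.card ι * b := by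
  have split : ∑ i, spikedSign o σ i * x i =
      ∑ i, boolSign (σ i) * x i + 2 * √(Fintype.card ι) * x o := by
    simp [spikedSign, add_mul, Finset.sum_add_distrib]
  have hspike : (2 * √(Fintype.card ι) * x o) ^ 2 ≤ 4 * q * (Fintype.card ι * b) := by
    rw [mul_pow, mul_pow, Real.sq_sqrt (Nat.cast_nonneg _)]
    nlinarith [mul_le_mul_of_nonneg_left hx (Nat.cast_nonneg (α := ℝ) (Fintype.card ι)),
      mul_nonneg (Nat.cast_nonneg (α := ℝ) (Fintype.card ι)) ((sq_nonneg _).trans hx)]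
  rw [split]
  nlinarith [sq_nonneg (∑ i, boolSign (σ i) * x i - 4 * (2 * √(Fintype.card ι) * x o))]

variable (κ : ℝ) (Φ : Matrix ι V ℝ) (o : ι) (σ : ι → Bool)

lemma spikedKernel_apply (u v : V) : spikedKernel κ Φ o σ u v =
    κ * ((∑ i, spikedSign o σ i * Φ i u) * ∑ i, spikedSign o σ i * Φ i v) := by
  simp only [spikedKernel, Matrix.mul_vecMulVec, Matrix.vecMulVec_mul, Matrix.smul_apply,
    Matrix.vecMulVec_apply, smul_eq_mul, Matrix.mulVec_transpose]
  rfl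

lemma isSymm_spikedKernel : (spikedKernel κ Φ o σ).IsSymm := by
  ext u v
  simp only [Matrix.transpose_apply, spikedKernel_apply]
  ring

variable [Fintype V]

lemma rank_spikedKernel_le_one : (spikedKernel κ Φ o σ).rank ≤ 1 := by
  rw [spikedKernel, Matrix.mul_vecMulVec, Matrix.vecMulVec_mul, ← Matrix.smul_vecMulVec]
  exact Matrix.rank_vecMulVec_le _ _

lemma spikedKernel_mulVec_eq_zero {w : V → ℝ} (hw : Φ *ᵥ w = 0) :
    spikedKernel κ Φ o σ *ᵥ w = 0 := by
  rw [spikedKernel, Matrix.smul_mulVec, ← Matrix.mulVec_mulVec, hw, Matrix.mulVec_zero, smul_zero]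

variable {Φ}

lemma norm_sq_spikedKernel_le (hΦ : Φ * Φᵀ = 1) :
    ‖spikedKernel κ Φ o σ‖ ^ 2 ≤ 81 * κ ^ 2 * (Fintype.card ι : ℝ) ^ 2 := by
  rw [spikedKernel, frobenius_norm_sq_smul, frobenius_norm_transpose_mul_mul hΦ hΦ,
    frobenius_norm_sq_vecMulVec]
  have hx := sum_spikedSign_sq_le o σ
  calc κ ^ 2 * ((∑ i, spikedSign o σ i ^ 2) * ∑ i, spikedSign o σ i ^ 2)
      ≤ κ ^ 2 * ((9 * Fintype.card ι) * (9 * Fintype.card ι)) := by gcongr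
    _ = 81 * κ ^ 2 * (Fintype.card ι : ℝ) ^ 2 := by ring

lemma norm_sq_spikedKernel_sub (hΦ : Φ * Φᵀ = 1) (σ' : ι → Bool) :
    ‖spikedKernel κ Φ o σ - spikedKernel κ Φ o σ'‖ ^ 2 =
      κ ^ 2 * ‖Matrix.vecMulVec (spikedSign o σ) (spikedSign o σ) -
        Matrix.vecMulVec (spikedSign o σ') (spikedSign o σ')‖ ^ 2 := by
  rw [spikedKernel, spikedKernel, ← smul_sub, ← Matrix.sub_mul, ← Matrix.mul_sub,
    frobenius_norm_sq_smul, frobenius_norm_transpose_mul_mul hΦ hΦ]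

lemma norm_sq_spikedKernel_sub_flipAt_le (hΦ : Φ * Φᵀ = 1) (e : ι) :
    ‖spikedKernel κ Φ o σ - spikedKernel κ Φ o (flipAt e σ)‖ ^ 2 ≤
      144 * κ ^ 2 * Fintype.card ι := by
  rw [norm_sq_spikedKernel_sub κ o σ hΦ]
  set x := spikedSign o σ
  set y := spikedSign o (flipAt e σ)
  have hx : ∑ i, x i ^ 2 ≤ 9 * Fintype.card ι := sum_spikedSign_sq_le o σ
  have hy : ∑ i, y i ^ 2 ≤ 9 * Fintype.card ι := sum_spikedSign_sq_le o _
  have hxy : ∑ i, (x - y) i ^ 2 = 4 := sum_sq_spikedSign_sub_flipAt o σ e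
  have telescope : Matrix.vecMulVec x x - Matrix.vecMulVec y y =
      Matrix.vecMulVec x (x - y) + Matrix.vecMulVec (x - y) y := by
    rw [Matrix.vecMulVec_sub, Matrix.sub_vecMulVec, sub_add_sub_cancel]
  calc κ ^ 2 * ‖Matrix.vecMulVec x x - Matrix.vecMulVec y y‖ ^ 2
      ≤ κ ^ 2 * (‖Matrix.vecMulVec x (x - y)‖ + ‖Matrix.vecMulVec (x - y) y‖) ^ 2 := by
        rw [telescope]
        gcongr
        exact norm_add_le _ _
    _ ≤ κ ^ 2 * (2 * (‖Matrix.vecMulVec x (x - y)‖ ^ 2 + ‖Matrix.vecMulVec (x - y) y‖ ^ 2)) := by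
        gcongr
        exact add_sq_le
    _ = κ ^ 2 * (8 * ∑ i, x i ^ 2 + 8 * ∑ i, y i ^ 2) := by
        rw [frobenius_norm_sq_vecMulVec, frobenius_norm_sq_vecMulVec, hxy]
        ring
    _ ≤ κ ^ 2 * (8 * (9 * Fintype.card ι) + 8 * (9 * Fintype.card ι)) := by gcongr
    _ = 144 * κ ^ 2 * Fintype.card ι := by ring

lemma le_norm_sq_spikedKernel_sub (hΦ : Φ * Φᵀ = 1) (σ' : ι → Bool) :
    4 * κ ^ 2 * Fintype.card ι * hammingDist σ σ' ≤
      ‖spikedKernel κ Φ o σ - spikedKernel κ Φ o σ'‖ ^ 2 := by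
  rw [norm_sq_spikedKernel_sub κ o σ hΦ]
  set x := spikedSign o σ
  set x' := spikedSign o σ'
  calc 4 * κ ^ 2 * Fintype.card ι * hammingDist σ σ'
      = κ ^ 2 * ∑ j, Fintype.card ι * (boolSign (σ j) - boolSign (σ' j)) ^ 2 := by
        rw [← Finset.mul_sum, sum_sq_boolSign_sub]
        ring
    _ ≤ κ ^ 2 * ∑ j, (x o * x j - x' o * x' j) ^ 2 := by
        gcongr with j
        exact card_mul_sq_boolSign_sub_le o σ σ' j
    _ ≤ κ ^ 2 * ‖Matrix.vecMulVec x x - Matrix.vecMulVec x' x'‖ ^ 2 := by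
        rw [frobenius_norm_sq]
        refine mul_le_mul_of_nonneg_left ?_ (sq_nonneg κ)
        exact Finset.single_le_sum (f := fun i ↦ ∑ j, (x i * x j - x' i * x' j) ^ 2)
          (fun i _ ↦ Finset.sum_nonneg fun j _ ↦ sq_nonneg _) (Finset.mem_univ o)

lemma card_exists_lt_abs_spikedKernel_le {q b a : ℝ} (hq : 1 ≤ q) (hb : 0 < b) (ha : 0 ≤ a)
    (hmoment : ∀ i, ∑ u, (Φ i u ^ 2) ^ q ≤ b ^ q)
    (hκ : 4320 * κ ^ 2 * q * (Fintype.card ι : ℝ) ^ 3 * b ^ 2 ≤ a ^ 2) :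
    (#{σ : ι → Bool | ∃ u v, a / 2 < |spikedKernel κ Φ o σ u v|} : ℝ) ≤
      2 ^ Fintype.card ι / 20 := by
  have : Nonempty ι := ⟨o⟩
  have hΦb (i : ι) (u : V) : Φ i u ^ 2 ≤ b :=
    le_of_sum_rpow_le (fun v ↦ sq_nonneg (Φ i v)) (by linarith) hb.le (hmoment i) u
  refine le_trans ?_ (card_exists_lt_sq_sum_boolSign_le_of_forall_moment (fun u i ↦ Φ i u) hq hb
    hmoment)
  rw [Nat.cast_le]
  refine Finset.card_le_card (Finset.monotone_filter_right _ fun σ _ ↦ ?_)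
  contrapose!
  intro hσ u v
  refine abs_le_of_sq_le_sq ?_ (by positivity)
  calc spikedKernel κ Φ o σ u v ^ 2
      = κ ^ 2 * ((∑ i, spikedSign o σ i * Φ i u) ^ 2 * (∑ i, spikedSign o σ i * Φ i v) ^ 2) := by
        rw [spikedKernel_apply]
        ring
    _ ≤ κ ^ 2 * (9 * (Fintype.card ι : ℝ) ^ 2 * b * (120 * q * Fintype.card ι * b)) := by
        gcongr
        · exact sq_sum_spikedSign_mul_le o σ fun i ↦ hΦb i u
        · exact sq_sum_spikedSign_mul_le_of_sq_sum_boolSign_le hq (hΦb o v) (hσ v)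
    _ ≤ (a / 2) ^ 2 := by linarith

end SpikedCube

section BlockCube

open scoped Matrix Matrix.Norms.Frobenius

variable {I J V : Type*} [Fintype I] [Fintype J]

/-- The `I × J` matrix with entries `±κ` prescribed by the bits of `σ`. -/
def signMatrix (κ : ℝ) (σ : I × J → Bool) : Matrix I J ℝ :=
  Matrix.of fun i j ↦ κ * boolSign (σ (i, j))

lemma norm_sq_signMatrix (κ : ℝ) (σ : I × J → Bool) :
    ‖signMatrix κ σ‖ ^ 2 = κ ^ 2 * (Fintype.card I * Fintype.card J) := by
  simp only [frobenius_norm_sq, signMatrix, Matrix.of_apply, mul_pow, boolSign_sq, mul_one,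
    Finset.sum_const, Finset.card_univ, nsmul_eq_mul]
  ring

lemma norm_sq_signMatrix_sub (κ : ℝ) (σ σ' : I × J → Bool) :
    ‖signMatrix κ σ - signMatrix κ σ'‖ ^ 2 = 4 * κ ^ 2 * hammingDist σ σ' := by
  have hsum := sum_sq_boolSign_sub σ σ'
  rw [Fintype.sum_prod_type] at hsum
  simp only [frobenius_norm_sq, signMatrix, Matrix.sub_apply, Matrix.of_apply, ← mul_sub, mul_pow,
    ← Finset.mul_sum, hsum]
  ring

/-- The symmetric kernel with matrix `[0, B; Bᵀ, 0]` in the system made of the rows of `A` and the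
rows of `D`. -/
def crossKernel (A : Matrix I V ℝ) (D : Matrix J V ℝ) (B : Matrix I J ℝ) : Matrix V V ℝ :=
  Aᵀ * B * D + (Aᵀ * B * D)ᵀ

variable (A : Matrix I V ℝ) (D : Matrix J V ℝ) (B : Matrix I J ℝ)

lemma isSymm_crossKernel : (crossKernel A D B).IsSymm := Matrix.isSymm_add_transpose_self _

lemma crossKernel_sub (B' : Matrix I J ℝ) :
    crossKernel A D B - crossKernel A D B' = crossKernel A D (B - B') := by
  simp only [crossKernel, Matrix.mul_sub, Matrix.sub_mul, Matrix.transpose_sub]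
  abel

lemma transpose_mul_signMatrix_mul_apply (κ : ℝ) (σ : I × J → Bool) (u v : V) :
    (Aᵀ * signMatrix κ σ * D) u v = κ * ∑ e, boolSign (σ e) * (A e.1 u * D e.2 v) := by
  simp only [Matrix.mul_apply, Matrix.transpose_apply, signMatrix, Matrix.of_apply,
    Fintype.sum_prod_type_right, Finset.mul_sum, Finset.sum_mul]
  exact Finset.sum_congr rfl fun j _ ↦ Finset.sum_congr rfl fun i _ ↦ by ring

variable [Fintype V]

lemma rank_crossKernel_le : (crossKernel A D B).rank ≤ 2 * Fintype.card I := by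
  have factor : crossKernel A D B =
      Matrix.fromCols Aᵀ (B * D)ᵀ * Matrix.fromRows (B * D) A := by
    rw [Matrix.fromCols_mul_fromRows, crossKernel, Matrix.mul_assoc, Matrix.transpose_mul,
      Matrix.transpose_transpose]
  rw [factor]
  refine (Matrix.rank_mul_le_left _ _).trans ((Matrix.rank_le_card_width _).trans_eq ?_)
  rw [Fintype.card_sum, two_mul]

lemma norm_sq_add_transpose_of_mul_self_eq_zero {M : Matrix V V ℝ} (hM : M * M = 0) :
    ‖M + Mᵀ‖ ^ 2 = 2 * ‖M‖ ^ 2 := by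
  rw [frobenius_norm_sq_add, Matrix.transpose_transpose, hM, Matrix.trace_zero,
    Matrix.frobenius_norm_transpose]
  ring

variable {A D}

lemma crossKernel_mulVec_eq_zero {w : V → ℝ} (hA : A *ᵥ w = 0) (hD : D *ᵥ w = 0) :
    crossKernel A D B *ᵥ w = 0 := by
  simp only [crossKernel, Matrix.add_mulVec, Matrix.transpose_mul, Matrix.transpose_transpose,
    ← Matrix.mulVec_mulVec, hA, hD, Matrix.mulVec_zero, add_zero]

lemma norm_sq_crossKernel [DecidableEq I] [DecidableEq J] (hA : A * Aᵀ = 1) (hD : D * Dᵀ = 1)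
    (hDA : D * Aᵀ = 0) : ‖crossKernel A D B‖ ^ 2 = 2 * ‖B‖ ^ 2 := by
  have hsq : Aᵀ * B * D * (Aᵀ * B * D) = 0 := by
    rw [Matrix.mul_assoc, Matrix.mul_assoc Aᵀ B D, ← Matrix.mul_assoc D, hDA, Matrix.zero_mul,
      Matrix.mul_zero]
  rw [crossKernel, norm_sq_add_transpose_of_mul_self_eq_zero hsq,
    frobenius_norm_transpose_mul_mul hA hD]

lemma sum_sq_mul_rpow_le {q b : ℝ} {x y : V → ℝ} (hb : 0 ≤ b)
    (hx : ∑ u, (x u ^ 2) ^ q ≤ b ^ q) (hy : ∑ v, (y v ^ 2) ^ q ≤ b ^ q) :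
    ∑ k : V × V, ((x k.1 * y k.2) ^ 2) ^ q ≤ (b ^ 2) ^ q :=
  calc ∑ k : V × V, ((x k.1 * y k.2) ^ 2) ^ q
      = (∑ u, (x u ^ 2) ^ q) * ∑ v, (y v ^ 2) ^ q := by
        simp only [mul_pow, Real.mul_rpow (sq_nonneg _) (sq_nonneg _), Finset.sum_mul_sum,
          Fintype.sum_prod_type]
    _ ≤ b ^ q * b ^ q := by gcongr
    _ = (b ^ 2) ^ q := by rw [sq, Real.mul_rpow hb hb]

lemma card_exists_lt_abs_crossKernel_le [DecidableEq I] [DecidableEq J] [Nonempty I] [Nonempty J]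
    {κ q b a : ℝ} (hq : 1 ≤ q) (hb : 0 < b) (ha : 0 ≤ a)
    (hA : ∀ i, ∑ u, (A i u ^ 2) ^ q ≤ b ^ q) (hD : ∀ j, ∑ u, (D j u ^ 2) ^ q ≤ b ^ q)
    (hκ : 1280 * κ ^ 2 * q * (Fintype.card I * Fintype.card J) * b ^ 2 ≤ a ^ 2) :
    (#{σ : I × J → Bool | ∃ u v, a / 2 < |crossKernel A D (signMatrix κ σ) u v|} : ℝ) ≤
      2 ^ Fintype.card (I × J) / 20 := by
  refine le_trans ?_ (card_exists_lt_sq_sum_boolSign_le_of_forall_moment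
    (fun (k : V × V) (e : I × J) ↦ A e.1 k.1 * D e.2 k.2) hq (sq_pos_of_pos hb)
    fun e ↦ sum_sq_mul_rpow_le hb.le (hA e.1) (hD e.2))
  rw [Nat.cast_le]
  refine Finset.card_le_card (Finset.monotone_filter_right _ fun σ _ ↦ ?_)
  contrapose!
  intro hσ u v
  refine abs_le_of_sq_le_sq ?_ (by positivity)
  set X : V → V → ℝ := fun u v ↦ ∑ e, boolSign (σ e) * (A e.1 u * D e.2 v)
  have hX (u v : V) : X u v ^ 2 ≤ 80 * q * (Fintype.card I * Fintype.card J * b ^ 2) := by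
    simpa using hσ (u, v)
  calc crossKernel A D (signMatrix κ σ) u v ^ 2
      = κ ^ 2 * (X u v + X v u) ^ 2 := by
        rw [crossKernel, Matrix.add_apply, Matrix.transpose_apply,
          transpose_mul_signMatrix_mul_apply, transpose_mul_signMatrix_mul_apply]
        ring
    _ ≤ κ ^ 2 * (2 * (X u v ^ 2 + X v u ^ 2)) := by
        gcongr
        exact add_sq_le
    _ ≤ κ ^ 2 * (2 * (80 * q * (Fintype.card I * Fintype.card J * b ^ 2) +
          80 * q * (Fintype.card I * Fintype.card J * b ^ 2))) := by
        gcongr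
        · exact hX u v
        · exact hX v u
    _ ≤ (a / 2) ^ 2 := by linarith

end BlockCube

section Eigenfunctions

open scoped Matrix Matrix.Norms.Frobenius

variable {m : ℕ} {φ : ℕ → Fin m → ℝ} {K L : Type*}

/-- The matrix whose rows are the eigenfunctions with the indices listed by `idx`. -/
def eigenRows (φ : ℕ → Fin m → ℝ) (idx : K → ℕ) : Matrix K (Fin m) ℝ :=
  Matrix.of fun k ↦ φ (idx k)

lemma eigenRows_mul_transpose_eq_one [DecidableEq K] (hφ : OrthonormalFamily m φ) {idx : K → ℕ}
    (hidx : ∀ k, idx k ∈ Finset.Icc 1 m) (hinj : Function.Injective idx) :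
    eigenRows φ idx * (eigenRows φ idx)ᵀ = 1 := by
  ext k l
  exact (hφ _ (hidx k) _ (hidx l)).trans (by simp only [Matrix.one_apply, hinj.eq_iff])

lemma eigenRows_mul_transpose_eq_zero (hφ : OrthonormalFamily m φ) {idx : K → ℕ} {idx' : L → ℕ}
    (hidx : ∀ k, idx k ∈ Finset.Icc 1 m) (hidx' : ∀ l, idx' l ∈ Finset.Icc 1 m)
    (hne : ∀ k l, idx k ≠ idx' l) : eigenRows φ idx * (eigenRows φ idx')ᵀ = 0 := by
  ext k l
  exact (hφ _ (hidx k) _ (hidx' l)).trans (if_neg (hne k l))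

lemma eigenRows_mulVec_eq_zero (hφ : OrthonormalFamily m φ) {idx : K → ℕ}
    (hidx : ∀ k, idx k ∈ Finset.Icc 1 m) {j : ℕ} (hj : j ∈ Finset.Icc 1 m)
    (hne : ∀ k, idx k ≠ j) : eigenRows φ idx *ᵥ φ j = 0 := by
  ext k
  exact (hφ _ (hidx k) _ hj).trans (if_neg (hne k))

lemma sum_sq_mulVec_eq_hsNormSq (hφ : OrthonormalFamily m φ) (S : Matrix (Fin m) (Fin m) ℝ) :
    ∑ k ∈ Finset.Icc 1 m, ∑ u, (S *ᵥ φ k) u ^ 2 = hsNormSq S := by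
  set Φ := eigenRows φ fun i : Fin m ↦ i + 1
  have hΦ : Φᵀ * Φᵀᵀ = 1 := mul_eq_one_comm.1 <| eigenRows_mul_transpose_eq_one hφ
    (fun i ↦ by rw [Finset.mem_Icc]; lia) fun i j hij ↦ Fin.ext (Nat.succ_injective hij)
  have sum_Icc_eq (f : ℕ → ℝ) : ∑ k ∈ Finset.Icc 1 m, f k = ∑ i : Fin m, f (i + 1) := by
    rw [Fin.sum_univ_eq_sum_range fun i ↦ f (i + 1), Finset.range_eq_Ico,
      Finset.sum_Ico_add' f 0 m 1, zero_add, Finset.Ico_add_one_right_eq_Icc]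
  rw [hsNormSq_eq_norm_sq, ← frobenius_norm_mul_of_mul_transpose_eq_one S hΦ, frobenius_norm_sq,
    sum_Icc_eq, Finset.sum_comm]
  rfl

lemma sobolevHSSq_le_mul_hsNormSq (hφ : OrthonormalFamily m φ) {lam : ℕ → ℝ} {Λ : ℝ}
    {S : Matrix (Fin m) (Fin m) ℝ}
    (hS : ∀ k ∈ Finset.Icc 1 m, lam k ≤ Λ ∨ S *ᵥ φ k = 0) :
    sobolevHSSq lam φ S ≤ Λ * hsNormSq S := by
  rw [← sum_sq_mulVec_eq_hsNormSq hφ, Finset.mul_sum]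
  refine Finset.sum_le_sum fun k hk ↦ ?_
  rcases hS k hk with hle | hzero
  · gcongr
  · simp [hzero]

end Eigenfunctions

section Qp

variable {m : ℕ} {p : ℝ} {φ : ℕ → Fin m → ℝ} {j : ℕ}

lemma le_Qp (hj : j ∈ Finset.Icc 1 m) :
    ((∑ v, |√m * φ j v| ^ p) / m) ^ (2 / p) ≤ Qp m p φ := by
  set g : ℕ → ℝ := fun j ↦ ((∑ v, |√m * φ j v| ^ p) / m) ^ (2 / p)
  have hg (i : ℕ) : 0 ≤ g i := by positivity
  have hbdd : BddAbove (Set.range fun i ↦ ⨆ _ : i ∈ Finset.Icc 1 m, g i) := by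
    refine ⟨∑ i ∈ Finset.Icc 1 m, g i, ?_⟩
    rintro _ ⟨i, rfl⟩
    exact Real.iSup_le (fun hi ↦ Finset.single_le_sum (fun j _ ↦ hg j) hi)
      (Finset.sum_nonneg fun j _ ↦ hg j)
  calc g j = ⨆ _ : j ∈ Finset.Icc 1 m, g j := (ciSup_pos (f := fun _ ↦ g j) hj).symm
    _ ≤ Qp m p φ := le_ciSup hbdd j

lemma Qp_pos [NeZero m] (hφ : OrthonormalFamily m φ) : 0 < Qp m p φ := by
  have hm : 0 < (m : ℝ) := Nat.cast_pos.2 (NeZero.pos m)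
  have hmem : 1 ∈ Finset.Icc 1 m := Finset.mem_Icc.2 ⟨le_rfl, NeZero.one_le⟩
  obtain ⟨v, hv⟩ : ∃ v, φ 1 v ≠ 0 := by
    by_contra! hzero
    simpa [hzero] using hφ 1 hmem 1 hmem
  have hsum : 0 < ∑ v, |√m * φ 1 v| ^ p :=
    Finset.sum_pos' (fun _ _ ↦ by positivity) ⟨v, Finset.mem_univ v, by positivity⟩
  exact (by positivity : (0 : ℝ) < _).trans_le (le_Qp hmem)

lemma sum_sq_rpow_le_Qp [NeZero m] (hp : 0 < p) (hj : j ∈ Finset.Icc 1 m) :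
    ∑ u, (φ j u ^ 2) ^ (p / 2) ≤ ((m : ℝ) ^ (2 / p) * Qp m p φ / m) ^ (p / 2) := by
  have hm : 0 < (m : ℝ) := Nat.cast_pos.2 (NeZero.pos m)
  have hinv : 2 / p * (p / 2) = 1 := by field_simp
  have hQ : 0 ≤ Qp m p φ := le_trans (by positivity) (le_Qp hj)
  have abs_rpow_eq (u : Fin m) :
      |√m * φ j u| ^ p = (m : ℝ) ^ (p / 2) * (φ j u ^ 2) ^ (p / 2) := by
    rw [← Real.mul_rpow hm.le (sq_nonneg _)]
    nth_rw 2 [← Real.sq_sqrt hm.le]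
    rw [← mul_pow, ← sq_abs, ← Real.rpow_natCast_mul (abs_nonneg _), Nat.cast_ofNat,
      mul_div_cancel₀ p two_ne_zero]
  have hroot : (m : ℝ) ^ (p / 2) * ∑ u, (φ j u ^ 2) ^ (p / 2) / m ≤ Qp m p φ ^ (p / 2) := by
    have hle := Real.rpow_le_rpow (by positivity) (le_Qp (p := p) (φ := φ) hj) (half_pos hp).le
    rw [← Real.rpow_mul (by positivity), hinv, Real.rpow_one] at hle
    simpa only [abs_rpow_eq, ← Finset.mul_sum, ← Finset.sum_div, mul_div_assoc] using hle
  rw [Real.div_rpow (by positivity) hm.le, Real.mul_rpow (by positivity) hQ,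
    ← Real.rpow_mul hm.le, hinv, Real.rpow_one, le_div_iff₀ (by positivity)]
  rw [← Finset.sum_div, mul_div_assoc', div_le_iff₀ hm] at hroot
  linarith

end Qp

section HardCubes

open scoped Matrix Matrix.Norms.Frobenius

variable {m n r l : ℕ} {ρ a q b δ κ : ℝ} {lam : ℕ → ℝ} {φ : ℕ → Fin m → ℝ}

/-- `δ` lies below each of the three terms of `δₙ⁽¹⁾(r, ρ, a)` at the level `l`, cleared of
denominators. Here `q` stands for `p / 2`, and `b` for a bound on the `ℓ_q` norms of the squared
eigenfunctions. -/
structure IsFeasibleRate (m n r l : ℕ) (ρ a q b δ : ℝ) (lam : ℕ → ℝ) : Prop where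
  nonneg : 0 ≤ δ
  mul_sample_le : δ * n ≤ a ^ 2 * (min r l : ℕ) * l
  eigenvalue_mul_le : lam l * δ ≤ ρ ^ 2
  mul_moment_le : δ * q * (m : ℝ) ^ 2 * b ^ 2 * l ≤ a ^ 2 * (min r l : ℕ)

/-- `φ` is an orthonormal family whose squares are bounded by `b` in `ℓ_q`, and `lam l ≥ 0` is the
largest of the first `l ≤ m` eigenvalues: all that the constructions at the level `l` need to know
about the spectral decomposition of `W`. -/
structure IsEigenLevel (m l : ℕ) (q b : ℝ) (lam : ℕ → ℝ) (φ : ℕ → Fin m → ℝ) : Prop where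
  orth : OrthonormalFamily m φ
  level_le : l ≤ m
  nonneg : 0 ≤ lam l
  le_level : ∀ k ∈ Finset.Icc 1 l, lam k ≤ lam l
  moment_le : ∀ j ∈ Finset.Icc 1 m, ∑ u, (φ j u ^ 2) ^ q ≤ b ^ q

lemma norm_sq_crossKernel_eigenRows {s t : ℕ} (hφ : OrthonormalFamily m φ) (hst : s + t ≤ m)
    (B : Matrix (Fin s) (Fin t) ℝ) :
    ‖crossKernel (eigenRows φ fun i : Fin s ↦ i + 1) (eigenRows φ fun j : Fin t ↦ s + j + 1) B‖ ^ 2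
      = 2 * ‖B‖ ^ 2 := by
  have hidx (i : Fin s) : (i : ℕ) + 1 ∈ Finset.Icc 1 m := by rw [Finset.mem_Icc]; lia
  have hidx' (j : Fin t) : s + j + 1 ∈ Finset.Icc 1 m := by rw [Finset.mem_Icc]; lia
  exact norm_sq_crossKernel B
    (eigenRows_mul_transpose_eq_one hφ hidx fun i j hij ↦ Fin.ext (by lia))
    (eigenRows_mul_transpose_eq_one hφ hidx' fun i j hij ↦ Fin.ext (by lia))
    (eigenRows_mul_transpose_eq_zero hφ hidx' hidx fun j i ↦ by lia)

namespace IsFeasibleRate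

lemma sobolevHSSq_le (h : IsFeasibleRate m n r l ρ a q b δ lam) (hφ : IsEigenLevel m l q b lam φ)
    {S : Matrix (Fin m) (Fin m) ℝ} (hS : ∀ k ∈ Finset.Icc 1 m, l < k → S *ᵥ φ k = 0)
    (hnorm : ‖S‖ ^ 2 ≤ δ * (m : ℝ) ^ 2) : sobolevHSSq lam φ S ≤ ρ ^ 2 * (m : ℝ) ^ 2 := by
  have hlevel : ∀ k ∈ Finset.Icc 1 m, lam k ≤ lam l ∨ S *ᵥ φ k = 0 := fun k hk ↦
    (le_or_gt k l).imp (fun hkl ↦ hφ.le_level k (Finset.mem_Icc.2 ⟨(Finset.mem_Icc.1 hk).1, hkl⟩))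
      (hS k hk)
  calc sobolevHSSq lam φ S ≤ lam l * ‖S‖ ^ 2 := by
        rw [← hsNormSq_eq_norm_sq]
        exact sobolevHSSq_le_mul_hsNormSq hφ.orth hlevel
    _ ≤ lam l * (δ * (m : ℝ) ^ 2) := mul_le_mul_of_nonneg_left hnorm hφ.nonneg
    _ ≤ ρ ^ 2 * (m : ℝ) ^ 2 := by
        rw [← mul_assoc]
        gcongr
        exact h.eigenvalue_mul_le

lemma sq_mul_sample_le_of_min_eq_one (h : IsFeasibleRate m n r l ρ a q b δ lam) (hmin : min r l = 1)
    (hκ : 5000 * κ ^ 2 * (l : ℝ) ^ 2 = δ * (m : ℝ) ^ 2) :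
    720 * κ ^ 2 * l * n ≤ a ^ 2 * (m : ℝ) ^ 2 := by
  have hl : (0 : ℝ) < l := Nat.cast_pos.2 (by lia)
  have hsample := h.mul_sample_le
  rw [hmin, Nat.cast_one, mul_one] at hsample
  refine le_of_mul_le_mul_right ?_ hl
  calc 720 * κ ^ 2 * l * n * l = 720 / 5000 * ((m : ℝ) ^ 2 * (δ * n)) := by
        linear_combination 720 / 5000 * n * hκ
    _ ≤ 720 / 5000 * ((m : ℝ) ^ 2 * (a ^ 2 * l)) := by gcongr
    _ ≤ 1 * ((m : ℝ) ^ 2 * (a ^ 2 * l)) := by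
        gcongr
        norm_num
    _ = a ^ 2 * (m : ℝ) ^ 2 * l := by ring

lemma sq_mul_moment_le_of_min_eq_one (h : IsFeasibleRate m n r l ρ a q b δ lam) (hmin : min r l = 1)
    (hκ : 5000 * κ ^ 2 * (l : ℝ) ^ 2 = δ * (m : ℝ) ^ 2) :
    4320 * κ ^ 2 * q * (l : ℝ) ^ 3 * b ^ 2 ≤ a ^ 2 := by
  have hmoment := h.mul_moment_le
  rw [hmin, Nat.cast_one, mul_one] at hmoment
  have heq : 4320 * κ ^ 2 * q * (l : ℝ) ^ 3 * b ^ 2 =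
      4320 / 5000 * (δ * q * (m : ℝ) ^ 2 * b ^ 2 * l) := by
    linear_combination 4320 / 5000 * q * l * b ^ 2 * hκ
  linarith [sq_nonneg a]

theorem isHardCube_spikedKernel (h : IsFeasibleRate m n r l ρ a q b δ lam)
    (hφ : IsEigenLevel m l q b lam φ) (hmin : min r l = 1) (hl : 0 < l) (ha : 0 ≤ a) (hq : 1 ≤ q)
    (hb : 0 < b) (hκ : 5000 * κ ^ 2 * (l : ℝ) ^ 2 = δ * (m : ℝ) ^ 2) :
    IsHardCube n r ρ a (δ * (m : ℝ) ^ 2 / 100000) lam φ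
      (spikedKernel κ (eigenRows φ fun i : Fin l ↦ i + 1) ⟨0, hl⟩) := by
  have hidx (i : Fin l) : (i : ℕ) + 1 ∈ Finset.Icc 1 m := by
    have hlm := hφ.level_le
    rw [Finset.mem_Icc]
    lia
  set Φ := eigenRows φ fun i : Fin l ↦ i + 1
  have hΦ : Φ * Φᵀ = 1 :=
    eigenRows_mul_transpose_eq_one hφ.orth hidx fun i j hij ↦ Fin.ext (Nat.succ_injective hij)
  refine ⟨isSymm_spikedKernel _ _ _, fun σ ↦ (rank_spikedKernel_le_one _ _ _ σ).trans (by lia),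
    fun σ ↦ h.sobolevHSSq_le hφ (fun k hk hlk ↦ ?_) ?_, fun σ e ↦ ?_, fun σ σ' ↦ ?_, ?_⟩
  · exact spikedKernel_mulVec_eq_zero _ _ _ _ <|
      eigenRows_mulVec_eq_zero hφ.orth hidx hk fun i ↦ by lia
  · have hnorm := norm_sq_spikedKernel_le κ ⟨0, hl⟩ σ hΦ
    rw [Fintype.card_fin] at hnorm
    nlinarith [mul_nonneg (sq_nonneg κ) (sq_nonneg (l : ℝ))]
  · have hflip := norm_sq_spikedKernel_sub_flipAt_le κ ⟨0, hl⟩ σ hΦ e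
    rw [Fintype.card_fin] at hflip
    rw [hsNormSq_eq_norm_sq]
    calc 5 * n * _ ≤ 5 * n * (144 * κ ^ 2 * l) := by gcongr
      _ = 720 * κ ^ 2 * l * n := by ring
      _ ≤ a ^ 2 * (m : ℝ) ^ 2 := h.sq_mul_sample_le_of_min_eq_one hmin hκ
  · have hsep := le_norm_sq_spikedKernel_sub κ ⟨0, hl⟩ σ hΦ σ'
    rw [Fintype.card_fin] at hsep ⊢
    rw [hsNormSq_eq_norm_sq, ← hκ]
    calc _ = l * (4 * κ ^ 2 * l * hammingDist σ σ') := by ring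
      _ ≤ _ := by gcongr
  · have hbudget := h.sq_mul_moment_le_of_min_eq_one hmin hκ
    rw [← Fintype.card_fin l] at hbudget
    convert card_exists_lt_abs_spikedKernel_le (Φ := Φ) κ _ hq hb ha
      (fun i ↦ hφ.moment_le _ (hidx i)) hbudget

lemma sq_mul_sample_le_of_min_le {s : ℕ} (h : IsFeasibleRate m n r l ρ a q b δ lam) (hs : 0 < s)
    (hl : 0 < l) (hmin : min r l ≤ 3 * s) (hκ : 5000 * κ ^ 2 * (s * l) = δ * (m : ℝ) ^ 2) :
    40 * κ ^ 2 * n ≤ a ^ 2 * (m : ℝ) ^ 2 := by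
  have hmin' : ((min r l : ℕ) : ℝ) ≤ 3 * s := mod_cast hmin
  have hsl : (0 : ℝ) < s * l := mod_cast Nat.mul_pos hs hl
  refine le_of_mul_le_mul_right ?_ hsl
  calc 40 * κ ^ 2 * n * (s * l) = 40 / 5000 * ((m : ℝ) ^ 2 * (δ * n)) := by
        linear_combination 40 / 5000 * n * hκ
    _ ≤ 40 / 5000 * ((m : ℝ) ^ 2 * (a ^ 2 * (3 * s) * l)) := by
        gcongr ?_ * (_ * ?_)
        exact h.mul_sample_le.trans (by gcongr)
    _ = 120 / 5000 * (a ^ 2 * (m : ℝ) ^ 2 * (s * l)) := by ring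
    _ ≤ 1 * (a ^ 2 * (m : ℝ) ^ 2 * (s * l)) := by
        gcongr
        norm_num
    _ = a ^ 2 * (m : ℝ) ^ 2 * (s * l) := one_mul _

lemma sq_mul_moment_le_of_add_eq {s t : ℕ} (h : IsFeasibleRate m n r l ρ a q b δ lam) (hq : 0 ≤ q)
    (hl : 0 < l) (hst : s + t = l) (hκ : 5000 * κ ^ 2 * (s * l) = δ * (m : ℝ) ^ 2) :
    1280 * κ ^ 2 * q * (s * t) * b ^ 2 ≤ a ^ 2 := by
  have htl : (t : ℝ) ≤ l := mod_cast le_of_add_le_right hst.le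
  have hmoment : δ * q * (m : ℝ) ^ 2 * b ^ 2 ≤ a ^ 2 := by
    refine le_of_mul_le_mul_right (h.mul_moment_le.trans ?_) (Nat.cast_pos.2 hl : (0 : ℝ) < l)
    gcongr
    exact min_le_right r l
  calc 1280 * κ ^ 2 * q * (s * t) * b ^ 2 ≤ 1280 * κ ^ 2 * q * (s * l) * b ^ 2 := by gcongr
    _ = 1280 / 5000 * (δ * q * (m : ℝ) ^ 2 * b ^ 2) := by
        linear_combination 1280 / 5000 * q * b ^ 2 * hκ
    _ ≤ 1280 / 5000 * a ^ 2 := by gcongr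
    _ ≤ a ^ 2 := by linarith [sq_nonneg a]

theorem isHardCube_crossKernel {s t : ℕ} (h : IsFeasibleRate m n r l ρ a q b δ lam)
    (hφ : IsEigenLevel m l q b lam φ) (hs : 0 < s) (hst : s + t = l) (hsr : 2 * s ≤ min r l)
    (hrs : min r l ≤ 3 * s) (ha : 0 ≤ a) (hq : 1 ≤ q) (hb : 0 < b)
    (hκ : 5000 * κ ^ 2 * (s * l) = δ * (m : ℝ) ^ 2) :
    IsHardCube n r ρ a (δ * (m : ℝ) ^ 2 / 100000) lam φ fun σ : Fin s × Fin t → Bool ↦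
      crossKernel (eigenRows φ fun i : Fin s ↦ i + 1) (eigenRows φ fun j : Fin t ↦ s + j + 1)
        (signMatrix κ σ) := by
  have hlm := hφ.level_le
  have hidx (i : Fin s) : (i : ℕ) + 1 ∈ Finset.Icc 1 m := by rw [Finset.mem_Icc]; lia
  have hidx' (j : Fin t) : s + j + 1 ∈ Finset.Icc 1 m := by rw [Finset.mem_Icc]; lia
  have hnorm := norm_sq_crossKernel_eigenRows hφ.orth (s := s) (t := t) (by lia)
  set A := eigenRows φ fun i : Fin s ↦ i + 1
  set D := eigenRows φ fun j : Fin t ↦ s + j + 1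
  have hsub (σ σ' : Fin s × Fin t → Bool) :
      hsNormSq (crossKernel A D (signMatrix κ σ) - crossKernel A D (signMatrix κ σ')) =
        8 * κ ^ 2 * hammingDist σ σ' := by
    rw [hsNormSq_eq_norm_sq, crossKernel_sub, hnorm, norm_sq_signMatrix_sub]
    ring
  refine ⟨fun σ ↦ isSymm_crossKernel _ _ _, fun σ ↦ (rank_crossKernel_le _ _ _).trans ?_,
    fun σ ↦ h.sobolevHSSq_le hφ (fun k hk hlk ↦ ?_) ?_, fun σ e ↦ ?_, fun σ σ' ↦ ?_, ?_⟩
  · rw [Fintype.card_fin]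
    lia
  · exact crossKernel_mulVec_eq_zero _
      (eigenRows_mulVec_eq_zero hφ.orth hidx hk fun i ↦ by lia)
      (eigenRows_mulVec_eq_zero hφ.orth hidx' hk fun j ↦ by lia)
  · have htl : (t : ℝ) ≤ l := mod_cast le_of_add_le_right hst.le
    rw [hnorm, norm_sq_signMatrix, Fintype.card_fin, Fintype.card_fin, ← hκ]
    calc 2 * (κ ^ 2 * (s * t)) ≤ 2 * (κ ^ 2 * (s * l)) := by gcongr
      _ ≤ 5000 * (κ ^ 2 * (s * l)) := by gcongr; norm_num
      _ = 5000 * κ ^ 2 * (s * l) := by ring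
  · rw [hsub, hammingDist_flipAt, Nat.cast_one]
    linarith [h.sq_mul_sample_le_of_min_le hs (by lia) hrs hκ]
  · have hlt : (l : ℝ) ≤ 2 * t := mod_cast (by lia : l ≤ 2 * t)
    rw [hsub, ← hκ, Fintype.card_prod, Fintype.card_fin, Fintype.card_fin, Nat.cast_mul]
    calc _ = 4 * κ ^ 2 * (s * l) * hammingDist σ σ' := by ring
      _ ≤ 4 * κ ^ 2 * (s * (2 * t)) * hammingDist σ σ' := by gcongr
      _ = _ := by ring
  · have hbudget := h.sq_mul_moment_le_of_add_eq (by linarith) (by lia) hst hκ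
    have : NeZero s := ⟨hs.ne'⟩
    have : NeZero t := ⟨by lia⟩
    rw [← Fintype.card_fin s, ← Fintype.card_fin t] at hbudget
    convert card_exists_lt_abs_crossKernel_le (A := A) (D := D) hq hb ha
      (fun i ↦ hφ.moment_le _ (hidx i)) (fun j ↦ hφ.moment_le _ (hidx' j)) hbudget

theorem exists_memP_ofReal_le (h : IsFeasibleRate m n r l ρ a q b δ lam)
    (hφ : IsEigenLevel m l q b lam φ) (hr : 1 ≤ r) (hl : 1 ≤ l) (ha : 0 < a) (hq : 1 ≤ q)
    (hb : 0 < b) (Shat : (Fin n → Obs m) → Matrix (Fin m) (Fin m) ℝ) :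
    ∃ P, MemP m r ρ a lam φ P ∧ ENNReal.ofReal (1 / 10) ≤
      (Measure.pi fun _ : Fin n ↦ P)
        {ω | δ * (m : ℝ) ^ 2 / 100000 ≤ hsNormSq (Shat ω - regKernel m P)} := by
  have hm : NeZero m := ⟨by have := hφ.level_le; lia⟩
  have hδ := h.nonneg
  have hl' : (0 : ℝ) < l := Nat.cast_pos.2 hl
  have exists_scale (x : ℝ) (hx : 0 < x) : ∃ κ : ℝ, 5000 * κ ^ 2 * x = δ * (m : ℝ) ^ 2 :=
    ⟨√(δ * (m : ℝ) ^ 2 / (5000 * x)), by rw [Real.sq_sqrt (by positivity)]; field_simp⟩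
  rcases (le_min hr hl).eq_or_lt with hmin | hmin
  · obtain ⟨κ, hκ⟩ := exists_scale (l ^ 2) (by positivity)
    have : Nonempty (Fin l) := ⟨⟨0, hl⟩⟩
    exact (h.isHardCube_spikedKernel hφ hmin.symm hl ha.le hq hb hκ).exists_memP_ofReal_le ha
      (by positivity) Shat
  · obtain ⟨s, hs⟩ : ∃ s, s = min r l / 2 := ⟨_, rfl⟩
    have hs0 : 0 < s := by lia
    have : Nonempty (Fin s × Fin (l - s)) := ⟨⟨0, hs0⟩, ⟨0, by lia⟩⟩
    obtain ⟨κ, hκ⟩ := exists_scale (s * l) (mul_pos (Nat.cast_pos.2 hs0) hl')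
    exact (h.isHardCube_crossKernel hφ hs0 (t := l - s) (by lia) (by lia) (by lia) ha.le hq hb
      hκ).exists_memP_ofReal_le ha (by positivity) Shat

end IsFeasibleRate

end HardCubes

section Rate

variable {m n r l l0 : ℕ} {ρ a p Q δ : ℝ} {lam : ℕ → ℝ}

/-- The term of index `l` in the maximum defining `δₙ⁽¹⁾(r, ρ, a)`. -/
def delta1Term (m n r l : ℕ) (ρ a p Q : ℝ) (lam : ℕ → ℝ) : ℝ≥0∞ :=
  min (ENNReal.ofReal (a ^ 2 * (min r l : ℝ) * (l : ℝ) / n))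
    (min (ENNReal.ofReal (ρ ^ 2) / ENNReal.ofReal (lam l))
      (ENNReal.ofReal
        ((1 / (p - 1)) * (1 / Q ^ 2) * (a ^ 2 * (min r l : ℝ) / l) *
          ((m : ℝ) ^ ((4 : ℝ) / p))⁻¹)))

lemma mul_le_of_ofReal_le_div {x y : ℝ} (hx : 0 ≤ x) (hy : 0 ≤ y)
    (h : ENNReal.ofReal δ ≤ ENNReal.ofReal y / ENNReal.ofReal x) : x * δ ≤ y := by
  rcases hx.eq_or_lt with rfl | hpos
  · rwa [zero_mul]
  · rwa [← ENNReal.ofReal_div_of_pos hpos, ENNReal.ofReal_le_ofReal_iff (by positivity),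
      le_div_iff₀ hpos, mul_comm] at h

lemma mul_moment_le_of_le_div [NeZero m] (hp : 2 ≤ p) (hQ : 0 < Q) (hl : 1 ≤ l) (hδ : 0 ≤ δ)
    {x : ℝ} (h : δ ≤ (1 / (p - 1)) * (1 / Q ^ 2) * (x / l) * ((m : ℝ) ^ ((4 : ℝ) / p))⁻¹) :
    δ * (p / 2) * (m : ℝ) ^ 2 * ((m : ℝ) ^ (2 / p) * Q / m) ^ 2 * l ≤ x := by
  have hm : 0 < (m : ℝ) := Nat.cast_pos.2 (NeZero.pos m)
  have hp1 : 0 < p - 1 := by linarith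
  have hpow : ((m : ℝ) ^ (2 / p)) ^ 2 = (m : ℝ) ^ (4 / p) := by
    rw [← Real.rpow_mul_natCast hm.le]
    congr 1
    push_cast
    ring
  calc δ * (p / 2) * (m : ℝ) ^ 2 * ((m : ℝ) ^ (2 / p) * Q / m) ^ 2 * l
      = δ * (p / 2) * ((m : ℝ) ^ (4 / p) * Q ^ 2 * l) := by
        rw [div_pow, mul_pow, hpow]
        field_simp
    _ ≤ δ * (p - 1) * ((m : ℝ) ^ (4 / p) * Q ^ 2 * l) := by
        gcongr
        linarith
    _ ≤ (1 / (p - 1)) * (1 / Q ^ 2) * (x / l) * ((m : ℝ) ^ ((4 : ℝ) / p))⁻¹ * (p - 1) *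
          ((m : ℝ) ^ (4 / p) * Q ^ 2 * l) := by gcongr
    _ = x := by field_simp

lemma isFeasibleRate_of_ofReal_le_delta1Term [NeZero m] (hn : 1 ≤ n) (hp : 2 ≤ p) (hQ : 0 < Q)
    (hl : 1 ≤ l) (hlam : 0 ≤ lam l) (hδ : 0 ≤ δ)
    (h : ENNReal.ofReal δ ≤ delta1Term m n r l ρ a p Q lam) :
    IsFeasibleRate m n r l ρ a (p / 2) ((m : ℝ) ^ (2 / p) * Q / m) δ lam := by
  obtain ⟨hsample, heigen, hmoment⟩ : _ ∧ _ ∧ _ := by simpa only [delta1Term, le_min_iff] using h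
  have hp1 : 0 < p - 1 := by linarith
  rw [ENNReal.ofReal_le_ofReal_iff (by positivity)] at hsample hmoment
  exact
    { nonneg := hδ
      mul_sample_le := by
        rwa [le_div_iff₀ (Nat.cast_pos.2 hn), ← Nat.cast_min] at hsample
      eigenvalue_mul_le := mul_le_of_ofReal_le_div hlam (sq_nonneg ρ) heigen
      mul_moment_le := by
        rw [Nat.cast_min]
        exact mul_moment_le_of_le_div hp hQ hl hδ hmoment }

lemma exists_isFeasibleRate_of_delta1 [NeZero m] (hn : 1 ≤ n) (hp : 2 ≤ p) (hQ : 0 < Q)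
    (hl0 : 1 ≤ l0) (hl0m : l0 ≤ m) (hlam : ∀ k ∈ Finset.Icc 1 m, 0 ≤ lam k) :
    ∃ l ∈ Finset.Icc l0 m, ∃ δ, delta1 m n r l0 ρ a p Q lam ≤ ENNReal.ofReal δ ∧
      IsFeasibleRate m n r l ρ a (p / 2) ((m : ℝ) ^ (2 / p) * Q / m) δ lam := by
  obtain ⟨l, hl, hmax⟩ := Finset.exists_max_image (Finset.Icc l0 m)
    (fun l ↦ delta1Term m n r l ρ a p Q lam) ⟨m, Finset.mem_Icc.2 ⟨hl0m, le_rfl⟩⟩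
  have hl1 : 1 ≤ l := hl0.trans (Finset.mem_Icc.1 hl).1
  have hfin : delta1Term m n r l ρ a p Q lam ≠ ⊤ :=
    ne_top_of_le_ne_top ENNReal.ofReal_ne_top (min_le_left _ _)
  refine ⟨l, hl, (delta1Term m n r l ρ a p Q lam).toReal, ?_,
    isFeasibleRate_of_ofReal_le_delta1Term hn hp hQ hl1
      (hlam l (Finset.mem_Icc.2 ⟨hl1, (Finset.mem_Icc.1 hl).2⟩)) ENNReal.toReal_nonneg
      ENNReal.ofReal_toReal_le⟩
  rw [ENNReal.ofReal_toReal hfin]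
  exact iSup₂_le hmax

lemma isEigenLevel_Qp [NeZero m] {φ : ℕ → Fin m → ℝ} (hp : 0 < p) (hφ : OrthonormalFamily m φ)
    (hlam : ∀ k ∈ Finset.Icc 1 m, 0 ≤ lam k) (hmono : MonotoneOn lam (Set.Icc 1 m))
    (hl : l ∈ Finset.Icc 1 m) :
    IsEigenLevel m l (p / 2) ((m : ℝ) ^ (2 / p) * Qp m p φ / m) lam φ where
  orth := hφ
  level_le := (Finset.mem_Icc.1 hl).2
  nonneg := hlam l hl
  le_level k hk := by
    rw [Finset.mem_Icc] at hk hl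
    exact hmono ⟨hk.1, hk.2.trans hl.2⟩ hl hk.2
  moment_le _ hj := sum_sq_rpow_le_Qp hp hj

end Rate

theorem minimax_lower_bound_dense_general {m n r l0 : ℕ} {ρ a p : ℝ} {lam : ℕ → ℝ}
    {φ : ℕ → Fin m → ℝ} (hn : 1 ≤ n) (hr : 1 ≤ r) (hl0 : 1 ≤ l0) (hl0m : l0 ≤ m) (ha : 0 < a)
    (hp : 2 ≤ p) (hφ : OrthonormalFamily m φ) (hlam : ∀ k ∈ Finset.Icc 1 m, 0 ≤ lam k)
    (hmono : MonotoneOn lam (Set.Icc 1 m))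
    (Shat : (Fin n → Obs m) → Matrix (Fin m) (Fin m) ℝ) :
    ENNReal.ofReal (1 / 10) ≤
      ⨆ (P : Measure (Obs m)) (_ : MemP m r ρ a lam φ P),
        (Measure.pi fun _ : Fin n ↦ P)
          {ω | ENNReal.ofReal (1 / 100000) * delta1 m n r l0 ρ a p (Qp m p φ) lam ≤
            ENNReal.ofReal (l2PiSq (Shat ω - regKernel m P))} := by
  have : NeZero m := ⟨by lia⟩
  have hm : 0 < (m : ℝ) := Nat.cast_pos.2 (NeZero.pos m)
  have hQ : 0 < Qp m p φ := Qp_pos hφ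
  obtain ⟨l, hl, δ, hδ, hrate⟩ := exists_isFeasibleRate_of_delta1 (r := r) (ρ := ρ) (a := a) hn hp
    hQ hl0 hl0m hlam
  obtain ⟨hl0l, hlm⟩ := Finset.mem_Icc.1 hl
  have hl1 : 1 ≤ l := hl0.trans hl0l
  have hlevel := isEigenLevel_Qp (p := p) (by linarith) hφ hlam hmono (Finset.mem_Icc.2 ⟨hl1, hlm⟩)
  obtain ⟨P, hP, hprob⟩ :=
    hrate.exists_memP_ofReal_le hlevel hr hl1 ha (by linarith) (by positivity) Shat
  refine le_iSup₂_of_le P hP (hprob.trans (measure_mono fun ω hω ↦ ?_))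
  calc ENNReal.ofReal (1 / 100000) * delta1 m n r l0 ρ a p (Qp m p φ) lam
      ≤ ENNReal.ofReal (1 / 100000) * ENNReal.ofReal δ := by gcongr
    _ = ENNReal.ofReal (1 / 100000 * δ) := (ENNReal.ofReal_mul (by norm_num)).symm
    _ ≤ ENNReal.ofReal (l2PiSq (Shat ω - regKernel m P)) := by
        refine ENNReal.ofReal_le_ofReal ((le_div_iff₀ (by positivity)).2 (le_trans ?_ hω))
        linarith

/-- **Theorem 2 (minimax lower bound, dense case).** -/
theorem minimax_lower_bound_dense (c : ℝ) (hc : 1 ≤ c) :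
    ∃ c₁ > (0 : ℝ), ∃ c₂ > (0 : ℝ),
      ∀ (m n r k0 : ℕ) (ρ a p : ℝ) (lam : ℕ → ℝ) (φ : ℕ → Fin m → ℝ),
        1 ≤ m → 1 ≤ n → 1 ≤ r → r ≤ m → 0 < ρ → 0 < a → 2 ≤ p →
        IsEigenData m c lam φ k0 →
        ∀ Shat : (Fin n → Obs m) → Matrix (Fin m) (Fin m) ℝ,
          (∀ u v : Fin m, Measurable fun ω => Shat ω u v) →
          ENNReal.ofReal c₂ ≤
            ⨆ (P : Measure (Obs m)) (_ : MemP m r ρ a lam φ P),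
              (Measure.pi fun _ : Fin n => P)
                {ω | ENNReal.ofReal c₁ * delta1 m n r (min k0 32) ρ a p (Qp m p φ) lam ≤
                  ENNReal.ofReal (l2PiSq (Shat ω - regKernel m P))} :=
  ⟨1 / 100000, by norm_num, 1 / 10, by norm_num,
    fun _ _ _ _ _ _ _ _ _ _ hn hr _ _ ha hp hW Shat _ ↦
      minimax_lower_bound_dense_general hn hr (le_min hW.k0_mem.1 (by norm_num))
        ((min_le_left _ _).trans hW.k0_mem.2.1) ha hp hW.orth hW.nonneg
        (fun k hk l hl hkl ↦ hW.mono k l hk.1 hkl hl.2) Shat⟩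

end
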